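/- There exists a positive integer p₀ such that for every prime p ≥ p₀, every integer m with 2 ≤ m ≤ p−2, and every m-sum-free subset A ⊆ ℤ/pℤ, one has |A| ≤ p/3.1955. -/

import Mathlib

/-!
Let `p` be a large prime, `c` the residue of `m`, `N = |A|` and suppose `p < 3.1955 N`. Being
`m`-sum-free means that `x + y = c * z` has no solution in `A`.

Fourier analysis shows that `A` is concentrated. If no affine image of `A` had more than
`(p - N + 3) / 3` elements in a half-circle, all nontrivial exponential sums over `A` would be so small
that the main term in the count of solutions of `x + y = c * z` dominates and a solution exists
(`sum_cosZ_le`, `exists_large_half_arc`). The numerical margin at density `1 / 3.1955` is thin: the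
bound truncates the cosine at `15 / 16` and controls the rest by the mean of `cos ^ 16`.

Take the affine image of `A` with the most elements, say `k`, in the half-circle `[0, (p - 1) / 2]`.
These elements form a set `T` of integers whose sums do not wrap around, and `T + T` avoids the `N`
residues of the form `c * z + s`, so `|T + T| ≤ p - N ≤ 3k - 4`. By Freiman's `3n - 3` theorem
(`freiman_three_mul_sub_three`) the set `T` is, after an affine change of variable, contained in a short
interval, and its sumset contains an interval of `2k - 1` integers (`exists_interval_subset_add`). Hence
`c` times the new copy of `A` lies in the complement of this interval. That complement is so short that
maximality of `k` forces `k = N`. So `A` is affinely equivalent to a set `S` of integers with diameter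
at most `p - 2N`, and all differences of `c * S` are congruent to integers of absolute value at most
`p - 2N`.

Since `S` is dense in its interval, each `d` with `1 ≤ d ≤ 4N - p - 2` is a difference of `S`, so `c * d`
is within `p - 2N` of a multiple of `p`. For `c ≠ 0, 1, -1` this is impossible
(`exists_multiple_off_short_interval`).
-/

namespace MSumFree

open scoped Pointwise

/-! ### Sumsets of integer sets of small diameter -/

/-- If `x + y` is missing from `A + A`, the reflection `a ↦ x + y - a` maps `A ∩ [x, y]` off `A`, so
`A` fills at most half of `[x, y]`. -/
lemma two_card_le_of_notMem (A : Finset ℤ) {x y : ℤ} (hxy : x ≤ y + 1) (h : x + y ∉ A + A) :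
    2 * ((A.filter (fun a => x ≤ a ∧ a ≤ y)).card : ℤ) ≤ y - x + 1 := by
  set F := A.filter (fun a => x ≤ a ∧ a ≤ y) with hF
  have hinj : Function.Injective (fun a : ℤ => x + y - a) := fun a b hab => by
    simp only at hab; omega
  have hdisj : Disjoint F (F.image (fun a => x + y - a)) := by
    rw [Finset.disjoint_left]
    intro a ha hb
    obtain ⟨b, hbF, rfl⟩ := Finset.mem_image.1 hb
    apply h
    rw [Finset.mem_add]
    exact ⟨x + y - b, (Finset.mem_filter.1 ha).1, b, (Finset.mem_filter.1 hbF).1, by ring⟩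
  have hsub : F ∪ F.image (fun a => x + y - a) ⊆ Finset.Icc x y := by
    intro a ha
    rw [Finset.mem_Icc]
    rcases Finset.mem_union.1 ha with ha | ha
    · exact (Finset.mem_filter.1 ha).2
    · obtain ⟨b, hb, rfl⟩ := Finset.mem_image.1 ha
      have := (Finset.mem_filter.1 hb).2
      constructor <;> omega
  have := Finset.card_le_card hsub
  rw [Finset.card_union_of_disjoint hdisj, Finset.card_image_of_injective _ hinj,
    Int.card_Icc] at this
  omega

/-- Freiman's bound `|A| + diam A ≤ |A + A|` for sets of small diameter. For `u ≤ t < w` at least one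
of `u + t`, `w + t` lies in `A + A`, by pigeonhole, and both do when `t ∈ A`. -/
lemma card_add_diam_le (A : Finset ℤ) {u w : ℤ} (hu : u ∈ A) (hw : w ∈ A)
    (hA : ∀ a ∈ A, u ≤ a ∧ a ≤ w) (hd : w - u ≤ 2 * (A.card : ℤ) - 3) :
    (A.card : ℤ) + (w - u) ≤ (A + A).card := by
  have huw := (hA u hu).2
  set U := (Finset.Ico u w).filter (fun t => u + t ∉ A + A) with hU
  set V := (Finset.Ico u w).filter (fun t => u + t ∈ A + A) with hV
  have hUV : (V.card : ℤ) + U.card = w - u := by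
    have := Finset.card_filter_add_card_filter_not (s := Finset.Ico u w)
      (fun t => u + t ∈ A + A)
    rw [Int.card_Ico] at this
    have h2 : V.card + U.card = (w - u).toNat := this
    omega
  have hdisj : Disjoint U A := by
    rw [Finset.disjoint_left]
    intro t ht hA'
    exact (Finset.mem_filter.1 ht).2 (Finset.add_mem_add hu hA')
  have key : ∀ t ∈ U, w + t ∈ A + A := by
    intro t ht
    by_contra hcon
    obtain ⟨h1, h2⟩ := Finset.mem_filter.1 ht
    rw [Finset.mem_Ico] at h1
    have e1 := two_card_le_of_notMem A (x := u) (y := t) (by omega) h2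
    have e2 := two_card_le_of_notMem A (x := t) (y := w) (by omega) (by rw [add_comm t w]; exact hcon)
    have h3 : A ⊆ A.filter (fun a => u ≤ a ∧ a ≤ t) ∪ A.filter (fun a => t ≤ a ∧ a ≤ w) := by
      intro a ha
      have := hA a ha
      rw [Finset.mem_union, Finset.mem_filter, Finset.mem_filter]
      rcases le_total a t with h | h
      · left; exact ⟨ha, this.1, h⟩
      · right; exact ⟨ha, h, this.2⟩
    have h4 := (Finset.card_le_card h3).trans (Finset.card_union_le _ _)
    omega
  have hd2 : Disjoint (V.image (fun t => u + t)) ((U ∪ A).image (fun t => w + t)) := by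
    rw [Finset.disjoint_left]
    intro x hx hy
    obtain ⟨a, ha, rfl⟩ := Finset.mem_image.1 hx
    obtain ⟨b, hb, hab⟩ := Finset.mem_image.1 hy
    have h1 := Finset.mem_Ico.1 (Finset.mem_filter.1 ha).1
    have h2 : u ≤ b := by
      rcases Finset.mem_union.1 hb with hb | hb
      · exact (Finset.mem_Ico.1 (Finset.mem_filter.1 hb).1).1
      · exact (hA b hb).1
    omega
  have hsub : V.image (fun t => u + t) ∪ (U ∪ A).image (fun t => w + t) ⊆ A + A := by
    intro x hx
    rcases Finset.mem_union.1 hx with hx | hx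
    · obtain ⟨a, ha, rfl⟩ := Finset.mem_image.1 hx
      exact (Finset.mem_filter.1 ha).2
    · obtain ⟨a, ha, rfl⟩ := Finset.mem_image.1 hx
      rcases Finset.mem_union.1 ha with ha | ha
      · exact key a ha
      · exact Finset.add_mem_add hw ha
  have := Finset.card_le_card hsub
  rw [Finset.card_union_of_disjoint hd2, Finset.card_image_of_injective _ (add_right_injective u),
    Finset.card_image_of_injective _ (add_right_injective w),
    Finset.card_union_of_disjoint hdisj] at this
  omega

/-- A set of small diameter with `|A + A| ≤ 3|A| - 4` has at least `2|A| - 1` consecutive integers in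
its sumset. The sums missed below `u + w` all precede, modulo the diameter, those missed above it;
the interval is what lies between the last of the former and the first of the latter. -/
lemma exists_interval_subset_add (A : Finset ℤ) {u w : ℤ} (hu : u ∈ A) (hw : w ∈ A)
    (hA : ∀ a ∈ A, u ≤ a ∧ a ≤ w) (hd : w - u ≤ 2 * (A.card : ℤ) - 3)
    (hs : ((A + A).card : ℤ) ≤ 3 * (A.card : ℤ) - 4) :
    ∃ x y : ℤ, 2 * (A.card : ℤ) - 1 ≤ y - x ∧ ∀ t, x ≤ t → t < y → t ∈ A + A := by
  have huw := (hA u hu).2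
  -- `U` and `V` record the sums missing from the lower and the upper half of `A + A`
  set U := (Finset.Icc u w).filter (fun t => u + t ∉ A + A) with hU
  set V := (Finset.Icc u w).filter (fun t => w + t ∉ A + A) with hV
  have memU : ∀ t, t ∈ U ↔ (u ≤ t ∧ t ≤ w) ∧ u + t ∉ A + A := fun t => by
    rw [hU, Finset.mem_filter, Finset.mem_Icc]
  have memV : ∀ t, t ∈ V ↔ (u ≤ t ∧ t ≤ w) ∧ w + t ∉ A + A := fun t => by
    rw [hV, Finset.mem_filter, Finset.mem_Icc]
  have hUA : ∀ t ∈ U, t ∉ A := fun t ht h => ((memU t).1 ht).2 (Finset.add_mem_add hu h)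
  have hVA : ∀ t ∈ V, t ∉ A := fun t ht h => ((memV t).1 ht).2 (Finset.add_mem_add hw h)
  have hcl : ∀ t ∈ U, 2 * ((A.filter (fun a => u ≤ a ∧ a ≤ t)).card : ℤ) ≤ t - u + 1 := fun t ht =>
    two_card_le_of_notMem A (by have := (memU t).1 ht; omega) ((memU t).1 ht).2
  have hcr : ∀ t ∈ V, 2 * ((A.filter (fun a => t ≤ a ∧ a ≤ w)).card : ℤ) ≤ w - t + 1 := fun t ht =>
    two_card_le_of_notMem A (by have := (memV t).1 ht; omega)
      (by rw [add_comm t w]; exact ((memV t).1 ht).2)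
  have htot : 2 * (w - u) + 1 ≤ (A + A).card + U.card + V.card := by
    have hsub : Finset.Icc (2 * u) (2 * w) ⊆
        (A + A) ∪ U.image (fun t => u + t) ∪ V.image (fun t => w + t) := by
      intro x hx
      rw [Finset.mem_Icc] at hx
      simp only [Finset.mem_union, Finset.mem_image]
      by_cases hxA : x ∈ A + A
      · exact Or.inl (Or.inl hxA)
      · rcases le_total x (u + w) with h | h
        · left; right
          exact ⟨x - u, (memU _).2 ⟨by omega, by simpa using hxA⟩, by ring⟩
        · right
          exact ⟨x - w, (memV _).2 ⟨by omega, by simpa using hxA⟩, by ring⟩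
    have h := (Finset.card_le_card hsub).trans
      ((Finset.card_union_le _ _).trans (add_le_add_left (Finset.card_union_le _ _) _))
    rw [Finset.card_image_of_injective _ (add_right_injective u),
      Finset.card_image_of_injective _ (add_right_injective w), Int.card_Icc] at h
    omega
  -- no element of `V` is at most an element of `U`: a closest such pair would make `A` too small
  have noinv : ∀ n : ℕ, ∀ l ∈ V, ∀ t ∈ U, l ≤ t → t - l = n → False := by
    intro n
    induction n using Nat.strong_induction_on with
    | _ n ih =>
    intro l hl t ht hlt hn
    have hl' := (memV l).1 hl
    have ht' := (memU t).1 ht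
    have e1 := hcl t ht
    have e2 := hcr l hl
    set M := A.filter (fun a => l ≤ a ∧ a ≤ t) with hM
    have hsum : (A.card : ℤ) + M.card ≤ (A.filter (fun a => u ≤ a ∧ a ≤ t)).card +
        (A.filter (fun a => l ≤ a ∧ a ≤ w)).card := by
      have h1 : A ⊆ A.filter (fun a => u ≤ a ∧ a ≤ t) ∪ A.filter (fun a => l ≤ a ∧ a ≤ w) := by
        intro a ha
        have := hA a ha
        rw [Finset.mem_union, Finset.mem_filter, Finset.mem_filter]
        rcases le_total a t with h | h
        · left; exact ⟨ha, this.1, h⟩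
        · right; exact ⟨ha, by omega, this.2⟩
      have h2 : M ⊆ A.filter (fun a => u ≤ a ∧ a ≤ t) ∩ A.filter (fun a => l ≤ a ∧ a ≤ w) := by
        intro a ha
        obtain ⟨ha, h3⟩ := Finset.mem_filter.1 ha
        have := hA a ha
        rw [Finset.mem_inter, Finset.mem_filter, Finset.mem_filter]
        exact ⟨⟨ha, this.1, h3.2⟩, ⟨ha, h3.1, this.2⟩⟩
      have h3 := Finset.card_union_add_card_inter (A.filter (fun a => u ≤ a ∧ a ≤ t))
        (A.filter (fun a => l ≤ a ∧ a ≤ w))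
      have h4 := Finset.card_le_card h1
      have h5 := Finset.card_le_card h2
      omega
    rcases eq_or_lt_of_le hlt with heq | hlt
    · subst heq
      omega
    -- a closest inversion has no other missed residue in between
    have hmid : ∀ s, l < s → s < t → s ∉ U ∧ s ∉ V := by
      intro s h1 h2
      constructor
      · intro hs
        exact ih (s - l).toNat (by omega) l hl s hs h1.le (by omega)
      · intro hs
        exact ih (t - s).toNat (by omega) s hs t ht h2.le (by omega)
    have hUVd : Disjoint U V := by
      rw [Finset.disjoint_left]
      intro s hs hs'
      exact ih 0 (by omega) s hs' s hs le_rfl (by simp)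
    have hsub : U ∪ V ∪ A ∪ (Finset.Ioo l t \ M) ⊆ Finset.Icc u w := by
      intro a ha
      simp only [Finset.mem_union, Finset.mem_sdiff, Finset.mem_Ioo] at ha
      rw [Finset.mem_Icc]
      rcases ha with ((ha | ha) | ha) | ha
      · exact ((memU a).1 ha).1
      · exact ((memV a).1 ha).1
      · exact hA a ha
      · omega
    have hd1 : Disjoint (U ∪ V) A := by
      rw [Finset.disjoint_left]
      intro s hs hsA
      rcases Finset.mem_union.1 hs with hs | hs
      · exact hUA s hs hsA
      · exact hVA s hs hsA
    have hd2 : Disjoint (U ∪ V ∪ A) (Finset.Ioo l t \ M) := by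
      rw [Finset.disjoint_left]
      intro s hs hs2
      simp only [Finset.mem_union, Finset.mem_sdiff, Finset.mem_Ioo] at hs hs2
      have := hmid s hs2.1.1 hs2.1.2
      rcases hs with (hs | hs) | hs
      · exact this.1 hs
      · exact this.2 hs
      · exact hs2.2 (Finset.mem_filter.2 ⟨hs, by omega, by omega⟩)
    have hc := Finset.card_le_card hsub
    rw [Finset.card_union_of_disjoint hd2, Finset.card_union_of_disjoint hd1,
      Finset.card_union_of_disjoint hUVd, Int.card_Icc] at hc
    have hc2 := Finset.le_card_sdiff M (Finset.Ioo l t)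
    rw [Int.card_Ioo] at hc2
    omega
  -- `x` is the last element of `U`, or `u - 1` if there is none; `y` is the first element of `V`,
  -- or `w + 1` if there is none
  obtain ⟨x, hx1, hx2, hx3⟩ : ∃ x, u - 1 ≤ x ∧ (∀ t ∈ U, t ≤ x) ∧
      2 * ((A.filter (fun a => u ≤ a ∧ a ≤ x)).card : ℤ) ≤ x - u + 1 ∧ (x = u - 1 ∨ x ∈ U) := by
    rcases U.eq_empty_or_nonempty with h | h
    · refine ⟨u - 1, le_rfl, by simp [h], ?_, Or.inl rfl⟩
      rw [Finset.filter_false_of_mem]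
      · simp
      · intro a _; omega
    · refine ⟨U.max' h, ?_, fun t ht => Finset.le_max' _ _ ht, hcl _ (U.max'_mem h),
        Or.inr (U.max'_mem h)⟩
      have := (memU _).1 (U.max'_mem h)
      omega
  obtain ⟨y, hy1, hy2, hy3⟩ : ∃ y, y ≤ w + 1 ∧ (∀ t ∈ V, y ≤ t) ∧
      2 * ((A.filter (fun a => y ≤ a ∧ a ≤ w)).card : ℤ) ≤ w - y + 1 ∧ (y = w + 1 ∨ y ∈ V) := by
    rcases V.eq_empty_or_nonempty with h | h
    · refine ⟨w + 1, le_rfl, by simp [h], ?_, Or.inl rfl⟩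
      rw [Finset.filter_false_of_mem]
      · simp
      · intro a _; omega
    · refine ⟨V.min' h, ?_, fun t ht => Finset.min'_le _ _ ht, hcr _ (V.min'_mem h),
        Or.inr (V.min'_mem h)⟩
      have := (memV _).1 (V.min'_mem h)
      omega
  have hxy : x < y := by
    by_contra hcon
    rcases hx3.2 with h1 | h1 <;> rcases hy3.2 with h2 | h2
    · omega
    · have := (memV _).1 h2; omega
    · have := (memU _).1 h1; omega
    · exact noinv (x - y).toNat y h2 x h1 (by omega) (by omega)
  have hxw : x ≤ w := by
    rcases hx3.2 with h1 | h1
    · omega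
    · exact ((memU _).1 h1).1.2
  have hyu : u ≤ y := by
    rcases hy3.2 with h1 | h1
    · omega
    · exact ((memV _).1 h1).1.1
  refine ⟨u + x + 1, w + y, ?_, ?_⟩
  · have h1 : A ⊆ A.filter (fun a => u ≤ a ∧ a ≤ x) ∪ A.filter (fun a => y ≤ a ∧ a ≤ w) ∪
        Finset.Ioo x y := by
      intro a ha
      have := hA a ha
      simp only [Finset.mem_union, Finset.mem_filter, Finset.mem_Ioo]
      rcases le_or_gt a x with h | h
      · left; left; exact ⟨ha, this.1, h⟩
      · rcases le_or_gt y a with h' | h'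
        · left; right; exact ⟨ha, h', this.2⟩
        · right; exact ⟨h, h'⟩
    have h := (Finset.card_le_card h1).trans
      ((Finset.card_union_le _ _).trans (add_le_add_left (Finset.card_union_le _ _) _))
    rw [Int.card_Ioo] at h
    omega
  · intro t h1 h2
    by_contra hcon
    rcases le_total t (u + w) with h | h
    · have := hx2 (t - u) ((memU _).2 ⟨by omega, by simpa using hcon⟩)
      omega
    · have := hy2 (t - w) ((memV _).2 ⟨by omega, by simpa using hcon⟩)
      omega

/-! ### Gluing sumsets along a common point -/

lemma card_neg_add_neg (A : Finset ℤ) : ((-A) + (-A)).card = (A + A).card := by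
  rw [← neg_add, Finset.card_neg]

lemma two_card_sub_one_le (A : Finset ℤ) (hA : A.Nonempty) :
    2 * (A.card : ℤ) - 1 ≤ (A + A).card := by
  have := cauchy_davenport_add_of_linearOrder_isCancelAdd hA hA
  omega

/-- Suppose every initial segment of `S` fills more than half of its interval. Then `S + S` contains
all of `[2u, u + n]`, and a translate of `S` by a remote `q` brings the count to `3|S| - 1`. -/
lemma three_card_sub_one_le (S : Finset ℤ) {u n q : ℤ} (hu : u ∈ S) (hn : n ∈ S)
    (hS : ∀ a ∈ S, u ≤ a ∧ a ≤ n)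
    (hdense : ∀ x, u ≤ x → x ≤ n → x - u + 1 < 2 * ((S.filter (fun a => a ≤ x)).card : ℤ))
    (hq : 2 * (S.card : ℤ) - 1 ≤ q - u) :
    3 * (S.card : ℤ) - 1 ≤ ((S + S) ∪ S.image (fun a => q + a)).card := by
  have hun := (hS u hu).2
  have hlow : ∀ x, u ≤ x → x ≤ n → u + x ∈ S + S := by
    intro x h1 h2
    by_contra hcon
    have e1 := two_card_le_of_notMem S (x := u) (y := x) (by omega) hcon
    have e2 := hdense x h1 h2
    have : S.filter (fun a => a ≤ x) = S.filter (fun a => u ≤ a ∧ a ≤ x) :=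
      Finset.filter_congr fun a ha => by have := hS a ha; omega
    rw [this] at e2
    omega
  -- `t` is least with `n + t` missing from the sumset
  have hne : ((Finset.Icc u (n + 1)).filter (fun t => n + t ∉ S + S)).Nonempty := by
    refine ⟨n + 1, Finset.mem_filter.2 ⟨Finset.mem_Icc.2 ⟨by omega, le_rfl⟩, fun h => ?_⟩⟩
    obtain ⟨a, ha, b, hb, hab⟩ := Finset.mem_add.1 h
    have := hS a ha
    have := hS b hb
    omega
  obtain ⟨t, ht, htmin⟩ : ∃ t, (u ≤ t ∧ t ≤ n + 1 ∧ n + t ∉ S + S) ∧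
      ∀ x, u ≤ x → x < t → n + x ∈ S + S := by
    refine ⟨Finset.min' _ hne, ?_, fun x h1 h2 => ?_⟩
    · have := Finset.mem_filter.1 (Finset.min'_mem _ hne)
      rw [Finset.mem_Icc] at this
      exact ⟨this.1.1, this.1.2, this.2⟩
    · by_contra hcon
      have h3 := (Finset.mem_Icc.1 (Finset.mem_filter.1 (Finset.min'_mem _ hne)).1).2
      exact absurd (Finset.min'_le _ x (Finset.mem_filter.2
        ⟨Finset.mem_Icc.2 ⟨h1, by omega⟩, hcon⟩)) (not_le.2 h2)
  have hut : u < t := by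
    rcases eq_or_lt_of_le ht.1 with h | h
    · exact absurd (Finset.add_mem_add hn hu) (by rw [h]; exact ht.2.2)
    · exact h
  have e1 := two_card_le_of_notMem S (x := t) (y := n) (by omega) (by rw [add_comm t n]; exact ht.2.2)
  have e2 : S.card ≤ (t - u).toNat + (S.filter (fun a => t ≤ a ∧ a ≤ n)).card := by
    have h1 : S ⊆ Finset.Ico u t ∪ S.filter (fun a => t ≤ a ∧ a ≤ n) := by
      intro a ha
      have := hS a ha
      rw [Finset.mem_union, Finset.mem_filter, Finset.mem_Ico]
      rcases lt_or_ge a t with h | h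
      · exact Or.inl ⟨this.1, h⟩
      · exact Or.inr ⟨ha, h, this.2⟩
    have := (Finset.card_le_card h1).trans (Finset.card_union_le _ _)
    rwa [Int.card_Ico] at this
  have e3 : S.card ≤ (n + t - q - u).toNat + (S.filter (fun a => n + t ≤ q + a)).card := by
    have h1 : S ⊆ Finset.Ico u (n + t - q) ∪ S.filter (fun a => n + t ≤ q + a) := by
      intro a ha
      have := hS a ha
      rw [Finset.mem_union, Finset.mem_filter, Finset.mem_Ico]
      rcases lt_or_ge a (n + t - q) with h | h
      · exact Or.inl ⟨this.1, h⟩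
      · exact Or.inr ⟨ha, by omega⟩
    have := (Finset.card_le_card h1).trans (Finset.card_union_le _ _)
    rwa [Int.card_Ico] at this
  have hsub : Finset.Ico (2 * u) (n + t) ∪
      (S.filter (fun a => n + t ≤ q + a)).image (fun a => q + a) ⊆
      (S + S) ∪ S.image (fun a => q + a) := by
    intro x hx
    rcases Finset.mem_union.1 hx with hx | hx
    · rw [Finset.mem_Ico] at hx
      refine Finset.mem_union_left _ ?_
      rcases le_or_gt x (u + n) with h | h
      · simpa using hlow (x - u) (by omega) (by omega)
      · simpa using htmin (x - n) (by omega) (by omega)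
    · exact Finset.mem_union_right _ (Finset.image_subset_image (Finset.filter_subset _ _) hx)
  have hdisj : Disjoint (Finset.Ico (2 * u) (n + t))
      ((S.filter (fun a => n + t ≤ q + a)).image (fun a => q + a)) := by
    rw [Finset.disjoint_left]
    intro x hx hx2
    obtain ⟨a, ha, rfl⟩ := Finset.mem_image.1 hx2
    have := (Finset.mem_filter.1 ha).2
    rw [Finset.mem_Ico] at hx
    omega
  have := Finset.card_le_card hsub
  rw [Finset.card_union_of_disjoint hdisj, Int.card_Ico,
    Finset.card_image_of_injective _ (add_right_injective q)] at this
  omega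

/-- The reflection of `three_card_sub_one_le`, for sets whose final segments are dense. -/
lemma three_card_sub_one_le' (S : Finset ℤ) {u n q : ℤ} (hu : u ∈ S) (hn : n ∈ S)
    (hS : ∀ a ∈ S, u ≤ a ∧ a ≤ n)
    (hdense : ∀ x, u ≤ x → x ≤ n → n - x + 1 < 2 * ((S.filter (fun a => x ≤ a)).card : ℤ))
    (hq : 2 * (S.card : ℤ) - 1 ≤ n - q) :
    3 * (S.card : ℤ) - 1 ≤ ((S + S) ∪ S.image (fun a => q + a)).card := by
  have h := three_card_sub_one_le (-S) (u := -n) (n := -u) (q := -q) (by simpa) (by simpa)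
    (fun a ha => by have := hS (-a) (by simpa using ha); omega)
    (fun x h1 h2 => by
      have h3 := hdense (-x) (by omega) (by omega)
      have : (-S).filter (fun a => a ≤ x) = -(S.filter (fun a => -x ≤ a)) := by
        ext a
        simp only [Finset.mem_filter, Finset.mem_neg']
        constructor
        · rintro ⟨h4, h5⟩; exact ⟨h4, by omega⟩
        · rintro ⟨h4, h5⟩; exact ⟨h4, by omega⟩
      rw [this, Finset.card_neg]
      omega) (by rw [Finset.card_neg]; omega)
  have h2 : (-S + -S) ∪ (-S).image (fun a => -q + a) =
      -((S + S) ∪ S.image (fun a => q + a)) := by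
    rw [← neg_add]
    ext x
    simp only [Finset.mem_union, Finset.mem_neg', Finset.mem_image]
    refine or_congr Iff.rfl ⟨?_, ?_⟩
    · rintro ⟨a, ha, rfl⟩; exact ⟨-a, ha, by ring⟩
    · rintro ⟨a, ha, h⟩; exact ⟨-a, by simpa, by omega⟩
  rw [h2, Finset.card_neg, Finset.card_neg] at h
  exact h

/-- The differences of `A` have no common divisor `d ≥ 2`. This fails for sets with at most one
element, whose only difference is `0`. -/
def GcdOne (A : Finset ℤ) : Prop := ∀ d : ℤ, 2 ≤ d → ∃ a ∈ A, ∃ b ∈ A, ¬ d ∣ a - b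

lemma GcdOne.exists_not_dvd {A : Finset ℤ} (h : GcdOne A) {d : ℤ} (hd : 2 ≤ d) (c : ℤ) :
    ∃ a ∈ A, ¬ d ∣ a - c := by
  by_contra! hcon
  obtain ⟨a, ha, b, hb, hab⟩ := h d hd
  exact hab (by simpa using dvd_sub (hcon a ha) (hcon b hb))

lemma gcdOne_or {A : Finset ℤ} {c : ℤ} (hc : c ∈ A) :
    GcdOne A ∨ ∃ d : ℤ, 2 ≤ d ∧ ∀ a ∈ A, d ∣ a - c := by
  by_cases h : GcdOne A
  · exact Or.inl h
  · right
    unfold GcdOne at h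
    push Not at h
    obtain ⟨d, hd, h⟩ := h
    exact ⟨d, hd, fun a ha => h a ha c hc⟩

/-- Two sets separated by `c` have at most the sum `2c` in common. -/
lemma card_union_add_of_le {L R : Finset ℤ} {c : ℤ} (hL : ∀ l ∈ L, l ≤ c) (hR : ∀ r ∈ R, c ≤ r) :
    ((L + L).card : ℤ) + (R + R).card - 1 ≤ ((L + L) ∪ (R + R)).card := by
  have h : (L + L) ∩ (R + R) ⊆ {2 * c} := by
    intro x hx
    rw [Finset.mem_inter] at hx
    obtain ⟨a, ha, b, hb, rfl⟩ := Finset.mem_add.1 hx.1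
    obtain ⟨a', ha', b', hb', h⟩ := Finset.mem_add.1 hx.2
    have := hL a ha
    have := hL b hb
    have := hR a' ha'
    have := hR b' hb'
    rw [Finset.mem_singleton]
    omega
  have h1 := Finset.card_le_card h
  rw [Finset.card_singleton] at h1
  have := Finset.card_union_add_card_inter (L + L) (R + R)
  omega

lemma exists_min_not_dvd {R : Finset ℤ} {c d : ℤ} (h : ∃ r ∈ R, ¬ d ∣ r - c) :
    ∃ r ∈ R, ¬ d ∣ r - c ∧ ∀ r' ∈ R, ¬ d ∣ r' - c → r ≤ r' := by
  have hne : (R.filter (fun r => ¬ d ∣ r - c)).Nonempty := by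
    obtain ⟨r, h1, h2⟩ := h
    exact ⟨r, Finset.mem_filter.2 ⟨h1, h2⟩⟩
  have := Finset.mem_filter.1 (Finset.min'_mem _ hne)
  exact ⟨_, this.1, this.2, fun r' h1 h2 => Finset.min'_le _ _ (Finset.mem_filter.2 ⟨h1, h2⟩)⟩

/-- If `r` is the least element of `R` outside the progression `c + dℤ`, and `l < c` lies in that
progression, then `r + l` is not a sum of two elements of `R`: one of the two summands would be
outside the progression, hence at least `r`, and the other at least `c`. -/
lemma min_not_dvd_add_notMem {R : Finset ℤ} {c d r : ℤ} (hR : ∀ r ∈ R, c ≤ r)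
    (hr : ¬ d ∣ r - c) (hmin : ∀ r' ∈ R, ¬ d ∣ r' - c → r ≤ r') {l : ℤ}
    (hl : d ∣ l - c) (hlc : l < c) : r + l ∉ R + R := by
  intro h
  obtain ⟨a, ha, b, hb, hab⟩ := Finset.mem_add.1 h
  have h1 := hR a ha
  have h2 := hR b hb
  by_cases h3 : d ∣ a - c
  · by_cases h4 : d ∣ b - c
    · apply hr
      have := dvd_sub (dvd_add h3 h4) hl
      rwa [show a - c + (b - c) - (l - c) = r - c by linarith] at this
    · have := hmin b hb h4
      omega
  · have := hmin a ha h3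
    omega

/-- Gluing `L` and `R` at `c` when `L` lies in a progression `c + dℤ` and `R` does not: the sums `r + l`
with `r` the least element of `R` off the progression and `l ∈ L \ {c}` are new. -/
lemma card_add_of_left_dvd {L R : Finset ℤ} {c d : ℤ} (hcL : c ∈ L)
    (hL : ∀ l ∈ L, l ≤ c) (hR : ∀ r ∈ R, c ≤ r)
    (hdL : ∀ l ∈ L, d ∣ l - c) (hdR : ∃ r ∈ R, ¬ d ∣ r - c) :
    ((L + L).card : ℤ) + (R + R).card + L.card - 2 ≤ ((L ∪ R) + (L ∪ R)).card := by
  obtain ⟨r, hr, hrd, hmin⟩ := exists_min_not_dvd hdR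
  have hdisj : Disjoint ((L + L) ∪ (R + R)) ((L.erase c).image (fun l => r + l)) := by
    rw [Finset.disjoint_left]
    intro x hx hx2
    obtain ⟨l, hl, rfl⟩ := Finset.mem_image.1 hx2
    obtain ⟨hlc, hl⟩ := Finset.mem_erase.1 hl
    rcases Finset.mem_union.1 hx with hx | hx
    · obtain ⟨a, ha, b, hb, hab⟩ := Finset.mem_add.1 hx
      apply hrd
      have := dvd_sub (dvd_add (hdL a ha) (hdL b hb)) (hdL l hl)
      rwa [show a - c + (b - c) - (l - c) = r - c by linarith] at this
    · exact min_not_dvd_add_notMem hR hrd hmin (hdL l hl) (lt_of_le_of_ne (hL l hl) hlc) hx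
  have hsub : ((L + L) ∪ (R + R)) ∪ ((L.erase c).image (fun l => r + l)) ⊆ (L ∪ R) + (L ∪ R) := by
    refine Finset.union_subset (Finset.union_subset ?_ ?_) ?_
    · exact Finset.add_subset_add Finset.subset_union_left Finset.subset_union_left
    · exact Finset.add_subset_add Finset.subset_union_right Finset.subset_union_right
    · intro x hx
      obtain ⟨l, hl, rfl⟩ := Finset.mem_image.1 hx
      exact Finset.add_mem_add (Finset.mem_union_right _ hr)
        (Finset.mem_union_left _ (Finset.mem_of_mem_erase hl))
  have := Finset.card_le_card hsub
  rw [Finset.card_union_of_disjoint hdisj,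
    Finset.card_image_of_injective _ (add_right_injective r), Finset.card_erase_of_mem hcL] at this
  have := card_union_add_of_le hL hR
  have := Finset.card_pos.2 ⟨c, hcL⟩
  omega

lemma card_add_of_right_dvd {L R : Finset ℤ} {c d : ℤ} (hcR : c ∈ R)
    (hL : ∀ l ∈ L, l ≤ c) (hR : ∀ r ∈ R, c ≤ r)
    (hdR : ∀ r ∈ R, d ∣ r - c) (hdL : ∃ l ∈ L, ¬ d ∣ l - c) :
    ((L + L).card : ℤ) + (R + R).card + R.card - 2 ≤ ((L ∪ R) + (L ∪ R)).card := by
  have h := card_add_of_left_dvd (L := -R) (R := -L) (c := -c) (d := d) (by simpa)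
    (fun l hl => by have := hR (-l) (by simpa using hl); omega)
    (fun l hl => by have := hL (-l) (by simpa using hl); omega)
    (fun l hl => by
      have := hdR (-l) (by simpa using hl)
      rwa [← dvd_neg, show -(-l - c) = l - -c by ring] at this)
    (by
      obtain ⟨l, hl, h⟩ := hdL
      refine ⟨-l, by simpa, fun h2 => h ?_⟩
      rwa [← dvd_neg, show -(-l - -c) = l - c by ring] at h2)
  have e : -R ∪ -L = -(L ∪ R) := by
    ext x; simp only [Finset.mem_union, Finset.mem_neg']; tauto
  rw [e, card_neg_add_neg, card_neg_add_neg, card_neg_add_neg, Finset.card_neg] at h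
  omega

/-- Gluing `L` and `R` at `c` when `L ⊆ c + dℤ` and `R ⊆ c + eℤ` but neither progression contains both.
The cross sums are separated from `L + L`, from `R + R` and from each other by their divisibility
by `d` and `e`. -/
lemma card_add_of_both_dvd {L R : Finset ℤ} {c d e : ℤ} (hcL : c ∈ L) (hcR : c ∈ R)
    (hL : ∀ l ∈ L, l ≤ c) (hR : ∀ r ∈ R, c ≤ r)
    (hdL : ∀ l ∈ L, d ∣ l - c) (hdR : ∃ r ∈ R, ¬ d ∣ r - c)
    (heR : ∀ r ∈ R, e ∣ r - c) (heL : ∃ l ∈ L, ¬ e ∣ l - c) :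
    3 * (L.card : ℤ) + 3 * R.card - 6 ≤ ((L ∪ R) + (L ∪ R)).card := by
  obtain ⟨r, hr, hrd, hrmin⟩ := exists_min_not_dvd hdR
  -- the largest element of `L` outside the progression `c + eℤ`
  obtain ⟨l, hl, hle, hlmax⟩ : ∃ l ∈ L, ¬ e ∣ l - c ∧ ∀ l' ∈ L, ¬ e ∣ l' - c → l' ≤ l := by
    have hne : (L.filter (fun r => ¬ e ∣ r - c)).Nonempty := by
      obtain ⟨r, h1, h2⟩ := heL
      exact ⟨r, Finset.mem_filter.2 ⟨h1, h2⟩⟩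
    have := Finset.mem_filter.1 (Finset.max'_mem _ hne)
    exact ⟨_, this.1, this.2, fun r' h1 h2 => Finset.le_max' _ _ (Finset.mem_filter.2 ⟨h1, h2⟩)⟩
  set L1 := L.filter (fun x => ¬ e ∣ x - c) with hL1
  set L2 := L.filter (fun x => e ∣ x - c) with hL2
  set R1 := R.filter (fun x => ¬ d ∣ x - c) with hR1
  set R2 := R.filter (fun x => d ∣ x - c) with hR2
  have cL : L2.card + L1.card = L.card := Finset.card_filter_add_card_filter_not _
  have cR : R2.card + R1.card = R.card := Finset.card_filter_add_card_filter_not _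
  have hc2L : c ∈ L2 := Finset.mem_filter.2 ⟨hcL, by simp⟩
  have hc2R : c ∈ R2 := Finset.mem_filter.2 ⟨hcR, by simp⟩
  have hLR := cauchy_davenport_add_of_linearOrder_isCancelAdd (s := L1) (t := R1)
    ⟨l, Finset.mem_filter.2 ⟨hl, hle⟩⟩ ⟨r, Finset.mem_filter.2 ⟨hr, hrd⟩⟩
  -- residues modulo `d` and `e` of the various pieces of the sumset
  have dLL : ∀ x ∈ L + L, d ∣ x - 2 * c := by
    intro x hx
    obtain ⟨a, ha, b, hb, rfl⟩ := Finset.mem_add.1 hx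
    rw [show a + b - 2 * c = (a - c) + (b - c) by ring]
    exact dvd_add (hdL a ha) (hdL b hb)
  have eRR : ∀ x ∈ R + R, e ∣ x - 2 * c := by
    intro x hx
    obtain ⟨a, ha, b, hb, rfl⟩ := Finset.mem_add.1 hx
    rw [show a + b - 2 * c = (a - c) + (b - c) by ring]
    exact dvd_add (heR a ha) (heR b hb)
  have ndvd : ∀ q a b : ℤ, q ∣ a - c → ¬ q ∣ b - c → ¬ q ∣ a + b - 2 * c := by
    intro q a b h1 h2 h3
    apply h2
    have := dvd_sub h3 h1
    rwa [show a + b - 2 * c - (a - c) = b - c by ring] at this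
  have ydvd : ∀ q a b : ℤ, q ∣ a - c → q ∣ b - c → q ∣ a + b - 2 * c := by
    intro q a b h1 h2
    rw [show a + b - 2 * c = (a - c) + (b - c) by ring]
    exact dvd_add h1 h2
  have k1 : ∀ x ∈ L1 + R1, ¬ d ∣ x - 2 * c ∧ ¬ e ∣ x - 2 * c := by
    intro x hx
    obtain ⟨a, ha, b, hb, rfl⟩ := Finset.mem_add.1 hx
    obtain ⟨ha1, ha2⟩ := Finset.mem_filter.1 ha
    obtain ⟨hb1, hb2⟩ := Finset.mem_filter.1 hb
    exact ⟨ndvd d a b (hdL a ha1) hb2, by rw [add_comm]; exact ndvd e b a (heR b hb1) ha2⟩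
  have k2 : ∀ x ∈ (L2.erase c).image (fun y => r + y), ¬ d ∣ x - 2 * c ∧ e ∣ x - 2 * c ∧
      x ∉ R + R := by
    intro x hx
    obtain ⟨y, hy, rfl⟩ := Finset.mem_image.1 hx
    obtain ⟨hyc, hy⟩ := Finset.mem_erase.1 hy
    obtain ⟨hy1, hy2⟩ := Finset.mem_filter.1 hy
    exact ⟨by rw [add_comm]; exact ndvd d y r (hdL y hy1) hrd, ydvd e r y (heR r hr) hy2,
      min_not_dvd_add_notMem hR hrd hrmin (hdL y hy1) (lt_of_le_of_ne (hL y hy1) hyc)⟩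
  have k3 : ∀ x ∈ (R2.erase c).image (fun y => l + y), d ∣ x - 2 * c ∧ ¬ e ∣ x - 2 * c ∧
      x ∉ L + L := by
    intro x hx
    obtain ⟨y, hy, rfl⟩ := Finset.mem_image.1 hx
    obtain ⟨hyc, hy⟩ := Finset.mem_erase.1 hy
    obtain ⟨hy1, hy2⟩ := Finset.mem_filter.1 hy
    refine ⟨ydvd d l y (hdL l hl) hy2, by rw [add_comm]; exact ndvd e y l (heR y hy1) hle, ?_⟩
    intro h
    have hcy := lt_of_le_of_ne (hR y hy1) (Ne.symm hyc)
    obtain ⟨a, ha, b, hb, hab⟩ := Finset.mem_add.1 h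
    have h1 := hL a ha
    have h2 := hL b hb
    by_cases h3 : e ∣ a - c
    · by_cases h4 : e ∣ b - c
      · refine ndvd e y l (heR y hy1) hle ?_
        rw [add_comm y l, ← hab]
        exact ydvd e a b h3 h4
      · have := hlmax b hb h4
        omega
    · have := hlmax a ha h3
      omega
  have d1 : Disjoint ((L + L) ∪ (R + R)) (L1 + R1) := by
    rw [Finset.disjoint_left]
    intro x hx hx2
    rcases Finset.mem_union.1 hx with hx | hx
    · exact (k1 x hx2).1 (dLL x hx)
    · exact (k1 x hx2).2 (eRR x hx)
  have d2 : Disjoint ((L + L) ∪ (R + R) ∪ (L1 + R1)) ((L2.erase c).image (fun y => r + y)) := by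
    rw [Finset.disjoint_left]
    intro x hx hx2
    have := k2 x hx2
    rcases Finset.mem_union.1 hx with hx | hx
    · rcases Finset.mem_union.1 hx with hx | hx
      · exact this.1 (dLL x hx)
      · exact this.2.2 hx
    · exact (k1 x hx).2 this.2.1
  have d3 : Disjoint ((L + L) ∪ (R + R) ∪ (L1 + R1) ∪ ((L2.erase c).image (fun y => r + y)))
      ((R2.erase c).image (fun y => l + y)) := by
    rw [Finset.disjoint_left]
    intro x hx hx2
    have := k3 x hx2
    rcases Finset.mem_union.1 hx with hx | hx
    · rcases Finset.mem_union.1 hx with hx | hx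
      · rcases Finset.mem_union.1 hx with hx | hx
        · exact this.2.2 hx
        · exact this.2.1 (eRR x hx)
      · exact (k1 x hx).1 this.1
    · exact (k2 x hx).1 this.1
  have sL : L ⊆ L ∪ R := Finset.subset_union_left
  have sR : R ⊆ L ∪ R := Finset.subset_union_right
  have hsub : (L + L) ∪ (R + R) ∪ (L1 + R1) ∪ ((L2.erase c).image (fun y => r + y)) ∪
      ((R2.erase c).image (fun y => l + y)) ⊆ (L ∪ R) + (L ∪ R) := by
    refine Finset.union_subset (Finset.union_subset (Finset.union_subset (Finset.union_subset
      (Finset.add_subset_add sL sL) (Finset.add_subset_add sR sR))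
      (Finset.add_subset_add ((Finset.filter_subset _ _).trans sL)
        ((Finset.filter_subset _ _).trans sR))) ?_) ?_
    · intro x hx
      obtain ⟨y, hy, rfl⟩ := Finset.mem_image.1 hx
      exact Finset.add_mem_add (sR hr) (sL (Finset.mem_filter.1 (Finset.mem_of_mem_erase hy)).1)
    · intro x hx
      obtain ⟨y, hy, rfl⟩ := Finset.mem_image.1 hx
      exact Finset.add_mem_add (sL hl) (sR (Finset.mem_filter.1 (Finset.mem_of_mem_erase hy)).1)
  have := Finset.card_le_card hsub
  rw [Finset.card_union_of_disjoint d3, Finset.card_union_of_disjoint d2,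
    Finset.card_union_of_disjoint d1,
    Finset.card_image_of_injective _ (add_right_injective r),
    Finset.card_image_of_injective _ (add_right_injective l),
    Finset.card_erase_of_mem hc2L, Finset.card_erase_of_mem hc2R] at this
  have := card_union_add_of_le hL hR
  have := Finset.card_pos.2 ⟨c, hc2L⟩
  have := Finset.card_pos.2 ⟨c, hc2R⟩
  have := two_card_sub_one_le L ⟨c, hcL⟩
  have := two_card_sub_one_le R ⟨c, hcR⟩
  omega

/-- When both parts have coprime differences, a single cross sum outside `(L + L) ∪ (R + R)` makes up
for the common sum `2c`. It exists unless `c - 1 ∈ L` and `c + 1 ∈ R`. -/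
lemma card_add_of_gcdOne {L R : Finset ℤ} {c : ℤ}
    (hL : ∀ l ∈ L, l ≤ c) (hR : ∀ r ∈ R, c ≤ r) (gL : GcdOne L) (gR : GcdOne R)
    (hc : ¬ (c - 1 ∈ L ∧ c + 1 ∈ R)) :
    ((L + L).card : ℤ) + (R + R).card ≤ ((L ∪ R) + (L ∪ R)).card := by
  obtain ⟨l, hl, hlc, hlmax⟩ : ∃ l ∈ L, l < c ∧ ∀ l' ∈ L, l' < c → l' ≤ l := by
    have hne : (L.filter (fun r => r < c)).Nonempty := by
      obtain ⟨r, h1, h2⟩ := gL.exists_not_dvd (le_refl 2) c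
      exact ⟨r, Finset.mem_filter.2 ⟨h1, lt_of_le_of_ne (hL r h1) (by rintro rfl; simp at h2)⟩⟩
    have := Finset.mem_filter.1 (Finset.max'_mem _ hne)
    exact ⟨_, this.1, this.2, fun r' h1 h2 => Finset.le_max' _ _ (Finset.mem_filter.2 ⟨h1, h2⟩)⟩
  obtain ⟨r, hr, hrc, hrmin⟩ : ∃ r ∈ R, c < r ∧ ∀ r' ∈ R, c < r' → r ≤ r' := by
    have hne : (R.filter (fun r => c < r)).Nonempty := by
      obtain ⟨r, h1, h2⟩ := gR.exists_not_dvd (le_refl 2) c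
      exact ⟨r, Finset.mem_filter.2 ⟨h1, lt_of_le_of_ne (hR r h1) (by rintro rfl; simp at h2)⟩⟩
    have := Finset.mem_filter.1 (Finset.min'_mem _ hne)
    exact ⟨_, this.1, this.2, fun r' h1 h2 => Finset.min'_le _ _ (Finset.mem_filter.2 ⟨h1, h2⟩)⟩
  have sL : L ⊆ L ∪ R := Finset.subset_union_left
  have sR : R ⊆ L ∪ R := Finset.subset_union_right
  suffices h : ∃ x ∈ (L ∪ R) + (L ∪ R), x ∉ (L + L) ∪ (R + R) by
    obtain ⟨x, hx, hx2⟩ := h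
    have hsub : insert x ((L + L) ∪ (R + R)) ⊆ (L ∪ R) + (L ∪ R) :=
      Finset.insert_subset hx (Finset.union_subset
        (Finset.add_subset_add sL sL) (Finset.add_subset_add sR sR))
    have := Finset.card_le_card hsub
    rw [Finset.card_insert_of_notMem hx2] at this
    have := card_union_add_of_le hL hR
    omega
  by_cases hlr : l + r = 2 * c
  · have hd : 2 ≤ r - c := by
      by_contra hcon
      have e1 : l = c - 1 := by omega
      have e2 : r = c + 1 := by omega
      exact hc ⟨e1 ▸ hl, e2 ▸ hr⟩
    obtain ⟨y, hy, hyd, hymin⟩ := exists_min_not_dvd (gR.exists_not_dvd hd c)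
    refine ⟨y + l, Finset.add_mem_add (sR hy) (sL hl), ?_⟩
    rw [Finset.mem_union, not_or]
    constructor
    · intro h
      obtain ⟨a, ha, b, hb, hab⟩ := Finset.mem_add.1 h
      have h1 := hL a ha
      have h2 := hL b hb
      have h3 : c < y := lt_of_le_of_ne (hR y hy) (by rintro rfl; simp at hyd)
      have h4 := hrmin y hy h3
      have h5 : y = r := by omega
      rw [h5] at hyd
      exact hyd (dvd_refl _)
    · exact min_not_dvd_add_notMem hR hyd hymin
        (by rw [show l - c = -(r - c) by linarith, dvd_neg]) hlc
  · refine ⟨l + r, Finset.add_mem_add (sL hl) (sR hr), ?_⟩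
    rw [Finset.mem_union, not_or]
    constructor
    · intro h
      obtain ⟨a, ha, b, hb, hab⟩ := Finset.mem_add.1 h
      have h1 := hL a ha
      have h2 := hL b hb
      have h3 := hlmax a ha
      have h4 := hlmax b hb
      omega
    · intro h
      obtain ⟨a, ha, b, hb, hab⟩ := Finset.mem_add.1 h
      have h1 := hR a ha
      have h2 := hR b hb
      have h3 := hrmin a ha
      have h4 := hrmin b hb
      omega

/-- If the ranges of `L` and `R` overlap in `{c - 1, c}` only, the sumsets share at most three
elements. -/
lemma card_add_of_consecutive {L R : Finset ℤ} {c : ℤ}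
    (hL : ∀ l ∈ L, l ≤ c) (hR : ∀ r ∈ R, c - 1 ≤ r) :
    ((L + L).card : ℤ) + (R + R).card - 3 ≤ ((L ∪ R) + (L ∪ R)).card := by
  have h : (L + L) ∩ (R + R) ⊆ Finset.Icc (2 * c - 2) (2 * c) := by
    intro x hx
    rw [Finset.mem_inter] at hx
    obtain ⟨a, ha, b, hb, rfl⟩ := Finset.mem_add.1 hx.1
    obtain ⟨a', ha', b', hb', h⟩ := Finset.mem_add.1 hx.2
    have := hL a ha
    have := hL b hb
    have := hR a' ha'
    have := hR b' hb'
    rw [Finset.mem_Icc]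
    omega
  have h1 := Finset.card_le_card h
  rw [Int.card_Icc] at h1
  have := Finset.card_union_add_card_inter (L + L) (R + R)
  have := Finset.card_le_card (Finset.union_subset
    (Finset.add_subset_add (Finset.subset_union_left (s₁ := L) (s₂ := R))
      (Finset.subset_union_left (s₁ := L) (s₂ := R)))
    (Finset.add_subset_add (Finset.subset_union_right (s₁ := L) (s₂ := R))
      (Finset.subset_union_right (s₁ := L) (s₂ := R))))
  omega

/-! ### Freiman's `3n - 3` theorem -/

lemma card_filter_le_add_one (A : Finset ℤ) (x : ℤ) :
    (A.filter (fun a => a ≤ x + 1)).card =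
      (A.filter (fun a => a ≤ x)).card + if x + 1 ∈ A then 1 else 0 := by
  split_ifs with h
  · have : A.filter (fun a => a ≤ x + 1) = insert (x + 1) (A.filter (fun a => a ≤ x)) := by
      ext a
      rw [Finset.mem_insert, Finset.mem_filter, Finset.mem_filter]
      constructor
      · rintro ⟨h1, h2⟩
        rcases eq_or_lt_of_le h2 with h3 | h3
        · exact Or.inl h3
        · exact Or.inr ⟨h1, by omega⟩
      · rintro (rfl | ⟨h1, h2⟩)
        · exact ⟨h, le_rfl⟩
        · exact ⟨h1, by omega⟩
    rw [this, Finset.card_insert_of_notMem]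
    simp
  · rw [add_zero]
    congr 1
    refine Finset.filter_congr fun a ha => ⟨fun h2 => ?_, fun h2 => by omega⟩
    rcases eq_or_lt_of_le h2 with h3 | h3
    · exact absurd (h3 ▸ ha) h
    · omega

lemma card_filter_le_add_card_filter_ge (A : Finset ℤ) (x : ℤ) :
    (A.filter (fun a => a ≤ x)).card + (A.filter (fun a => x + 1 ≤ a)).card = A.card := by
  rw [← Finset.card_filter_add_card_filter_not (s := A) (fun a => a ≤ x)]
  congr 2
  exact Finset.filter_congr fun a _ => by omega

/-- **Freiman's `3n - 3` theorem**: a set of `n` integers with coprime differences and diameter at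
least `2n - 3` has at least `3n - 3` sums. By induction on `n`: if some interior `c ∈ A` leaves both
`A ∩ [u, c]` and `A ∩ [c, w]` sparse, the two pieces are glued along `c`; otherwise `A` splits into
a part dense from the left end and a part dense from the right end. -/
theorem freiman_three_mul_sub_three (n : ℕ) : ∀ (A : Finset ℤ) (u w : ℤ), A.card = n →
    u ∈ A → w ∈ A → (∀ a ∈ A, u ≤ a ∧ a ≤ w) → GcdOne A → 2 * (n : ℤ) - 3 ≤ w - u →
    3 * (n : ℤ) - 3 ≤ (A + A).card := by
  induction n using Nat.strong_induction_on with
  | _ n ih =>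
  intro A u w hn hu hw hA hg hlen
  have huw : u < w := by
    rcases eq_or_lt_of_le (hA u hu).2 with h | h
    · obtain ⟨a, ha, b, hb, hab⟩ := hg 2 le_rfl
      have := hA a ha
      have := hA b hb
      exact absurd (by rw [show a - b = 0 by omega]; exact dvd_zero 2) hab
    · exact h
  rcases eq_or_lt_of_le hlen with hlen' | hlen'
  · have := card_add_diam_le A hu hw hA (by omega)
    omega
  have ih' : ∀ (B : Finset ℤ) (u w : ℤ), B.card < n → u ∈ B → w ∈ B →
      (∀ a ∈ B, u ≤ a ∧ a ≤ w) → GcdOne B → 2 * (B.card : ℤ) - 3 ≤ w - u →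
      3 * (B.card : ℤ) - 3 ≤ (B + B).card :=
    fun B u w h1 h2 h3 h4 h5 h6 => ih B.card h1 B u w rfl h2 h3 h4 h5 h6
  clear ih
  set N : ℤ → ℤ := fun x => ((A.filter (fun a => a ≤ x)).card : ℤ) with hN
  have hstep : ∀ x, N (x + 1) = N x + if x + 1 ∈ A then 1 else 0 := by
    intro x
    simp only [hN, card_filter_le_add_one]
    split_ifs <;> simp
  have hNu : N u = 1 := by
    have : A.filter (fun a => a ≤ u) = {u} := by
      ext a
      rw [Finset.mem_filter, Finset.mem_singleton]
      exact ⟨fun h => by have := hA a h.1; omega, fun h => by rw [h]; exact ⟨hu, le_rfl⟩⟩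
    simp only [hN, this, Finset.card_singleton, Nat.cast_one]
  have hNw : N w = n := by
    have : A.filter (fun a => a ≤ w) = A := Finset.filter_true_of_mem fun a ha => (hA a ha).2
    simp only [hN, this, hn]
  -- number of elements from `x` on
  have hR : ∀ x, ((A.filter (fun a => x ≤ a)).card : ℤ) = n - N (x - 1) := by
    intro x
    have := card_filter_le_add_card_filter_ge A (x - 1)
    rw [sub_add_cancel] at this
    simp only [hN]
    omega
  by_cases hval : ∃ c ∈ A, u < c ∧ c < w ∧ 2 * N c - 2 ≤ c - u ∧ 2 * (n - N c) ≤ w - c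
  · obtain ⟨c, hc, huc, hcw, hc1, hc2⟩ := hval
    set L := A.filter (fun a => a ≤ c) with hLdef
    set R := A.filter (fun a => c ≤ a) with hRdef
    have hLR : L ∪ R = A := by
      ext a
      rw [Finset.mem_union, Finset.mem_filter, Finset.mem_filter]
      constructor
      · rintro (h | h) <;> exact h.1
      · intro h
        rcases le_total a c with h2 | h2
        · exact Or.inl ⟨h, h2⟩
        · exact Or.inr ⟨h, h2⟩
    have cL : (L.card : ℤ) = N c := rfl
    have cR : (R.card : ℤ) = n - N c + 1 := by
      have h1 := hR c
      have h2 := hstep (c - 1)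
      rw [sub_add_cancel, if_pos hc] at h2
      rw [hRdef]
      omega
    have hcL : c ∈ L := Finset.mem_filter.2 ⟨hc, le_rfl⟩
    have hcR : c ∈ R := Finset.mem_filter.2 ⟨hc, le_rfl⟩
    have huL : u ∈ L := Finset.mem_filter.2 ⟨hu, huc.le⟩
    have hwR : w ∈ R := Finset.mem_filter.2 ⟨hw, hcw.le⟩
    have hLc : ∀ l ∈ L, l ≤ c := fun l hl => (Finset.mem_filter.1 hl).2
    have hRc : ∀ r ∈ R, c ≤ r := fun r hr => (Finset.mem_filter.1 hr).2
    have hL' : ∀ l ∈ L, u ≤ l ∧ l ≤ c := fun l hl =>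
      ⟨(hA l (Finset.mem_filter.1 hl).1).1, hLc l hl⟩
    have hR' : ∀ r ∈ R, c ≤ r ∧ r ≤ w := fun r hr =>
      ⟨hRc r hr, (hA r (Finset.mem_filter.1 hr).1).2⟩
    have hLn : L.card < n := by
      rw [← hn]
      exact Finset.card_lt_card (Finset.filter_ssubset.2 ⟨w, hw, by omega⟩)
    have hRn : R.card < n := by
      rw [← hn]
      exact Finset.card_lt_card (Finset.filter_ssubset.2 ⟨u, hu, by omega⟩)
    have tL := two_card_sub_one_le L ⟨c, hcL⟩
    have tR := two_card_sub_one_le R ⟨c, hcR⟩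
    rw [← hLR]
    rcases gcdOne_or hcL with gL | ⟨d, hd, hdL⟩
    · have iL := ih' L u c hLn huL hcL hL' gL (by omega)
      rcases gcdOne_or hcR with gR | ⟨e, he, heR⟩
      · have iR := ih' R c w hRn hcR hwR hR' gR (by omega)
        by_cases hcc : c - 1 ∈ L ∧ c + 1 ∈ R
        · obtain ⟨hcc1, -⟩ := hcc
          have hcA : c - 1 ∈ A := (Finset.mem_filter.1 hcc1).1
          have huc1 : u < c - 1 := by
            by_contra hcon
            have h2 := hstep (c - 1)
            rw [sub_add_cancel, if_pos hc, show c - 1 = u by omega, hNu] at h2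
            omega
          set R2 := A.filter (fun a => c - 1 ≤ a) with hR2def
          have hLR2 : L ∪ R2 = L ∪ R := by
            rw [hLR]
            refine Finset.Subset.antisymm (Finset.union_subset (Finset.filter_subset _ _)
              (Finset.filter_subset _ _)) ?_
            rw [← hLR]
            refine Finset.union_subset_union_right fun a ha => ?_
            obtain ⟨h1, h2⟩ := Finset.mem_filter.1 ha
            exact Finset.mem_filter.2 ⟨h1, by omega⟩
          have cR2 : (R2.card : ℤ) = n - N c + 2 := by
            have h1 := hR (c - 1)
            have h2 := hstep (c - 1)
            have h3 := hstep (c - 1 - 1)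
            rw [sub_add_cancel, if_pos hc] at h2
            rw [sub_add_cancel, if_pos hcA] at h3
            rw [hR2def]
            omega
          have hR2n : R2.card < n := by
            rw [← hn]
            exact Finset.card_lt_card (Finset.filter_ssubset.2 ⟨u, hu, by omega⟩)
          have iR2 := ih' R2 (c - 1) w hR2n (Finset.mem_filter.2 ⟨hcA, le_rfl⟩)
            (Finset.mem_filter.2 ⟨hw, by omega⟩)
            (fun r hr => ⟨(Finset.mem_filter.1 hr).2, (hA r (Finset.mem_filter.1 hr).1).2⟩)
            (fun d hd => ⟨c, Finset.mem_filter.2 ⟨hc, by omega⟩, c - 1,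
              Finset.mem_filter.2 ⟨hcA, le_rfl⟩, fun h => by
                rw [sub_sub_cancel] at h
                have := Int.le_of_dvd one_pos h
                omega⟩) (by omega)
          have := card_add_of_consecutive (L := L) (R := R2) (c := c) hLc
            (fun r hr => (Finset.mem_filter.1 hr).2)
          rw [hLR2] at this
          omega
        · have := card_add_of_gcdOne hLc hRc gL gR hcc
          omega
      · have := card_add_of_right_dvd hcR hLc hRc heR (gL.exists_not_dvd he c)
        omega
    · have hdR : ∃ r ∈ R, ¬ d ∣ r - c := by
        obtain ⟨a, ha, hda⟩ := hg.exists_not_dvd hd c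
        rw [← hLR] at ha
        rcases Finset.mem_union.1 ha with ha | ha
        · exact absurd (hdL a ha) hda
        · exact ⟨a, ha, hda⟩
      rcases gcdOne_or hcR with gR | ⟨e, he, heR⟩
      · have iR := ih' R c w hRn hcR hwR hR' gR (by omega)
        have := card_add_of_left_dvd hcL hLc hRc hdL hdR
        omega
      · have heL : ∃ l ∈ L, ¬ e ∣ l - c := by
          obtain ⟨a, ha, hda⟩ := hg.exists_not_dvd he c
          rw [← hLR] at ha
          rcases Finset.mem_union.1 ha with ha | ha
          · exact ⟨a, ha, hda⟩
          · exact absurd (heR a ha) hda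
        have := card_add_of_both_dvd hcL hcR hLc hRc hdL hdR heR heL
        omega
  · push Not at hval
    -- cut `A` at the first element `z` before which `A` is not dense
    obtain ⟨z, hz, huz, hz1, hzmin⟩ : ∃ z ∈ A, u < z ∧ (z = w ∨ 2 * N z - 2 ≤ z - u) ∧
        ∀ c ∈ A, u < c → c < z → c - u < 2 * N c - 2 := by
      have hne : (A.filter (fun c => u < c ∧ (c = w ∨ 2 * N c - 2 ≤ c - u))).Nonempty :=
        ⟨w, Finset.mem_filter.2 ⟨hw, huw, Or.inl rfl⟩⟩
      have h := Finset.mem_filter.1 (Finset.min'_mem _ hne)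
      refine ⟨_, h.1, h.2.1, h.2.2, fun c hc h1 h2 => ?_⟩
      by_contra hcon
      exact absurd (Finset.min'_le _ c (Finset.mem_filter.2
        ⟨hc, h1, Or.inr (not_lt.1 hcon)⟩)) (not_le.2 h2)
    have hzw : z ≤ w := (hA z hz).2
    set L := A.filter (fun a => a < z) with hLdef
    set R := A.filter (fun a => z ≤ a) with hRdef
    have huL : u ∈ L := Finset.mem_filter.2 ⟨hu, huz⟩
    obtain ⟨m, hmL, hmmax⟩ : ∃ m ∈ L, ∀ a ∈ L, a ≤ m :=
      ⟨L.max' ⟨u, huL⟩, Finset.max'_mem _ _, fun a ha => Finset.le_max' _ _ ha⟩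
    obtain ⟨hmA, hmz⟩ := Finset.mem_filter.1 hmL
    have hum := hmmax u huL
    have hNL : ∀ x, x < z → ((L.filter (fun a => a ≤ x)).card : ℤ) = N x := by
      intro x hx
      simp only [hN, hLdef, Finset.filter_filter]
      congr 2
      exact Finset.filter_congr fun a _ => by omega
    have cL : (L.card : ℤ) = N m := by
      rw [← hNL m hmz, Finset.filter_true_of_mem hmmax]
    have hNz1 : N (z - 1) = N m := by
      rw [← hNL (z - 1) (by omega), ← cL, Finset.filter_true_of_mem]
      intro a ha
      have := (Finset.mem_filter.1 ha).2
      omega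
    have hNz : N z = N m + 1 := by
      have h2 := hstep (z - 1)
      rwa [sub_add_cancel, if_pos hz, hNz1] at h2
    have cR : (R.card : ℤ) = n - N m := by rw [hRdef, hR z, hNz1]
    -- the lower part is dense
    have hdenseL : ∀ x, x ≤ m → u ≤ x → x - u + 1 < 2 * N x := by
      have hA' : ∀ c ∈ A, u < c → c ≤ m → c - u < 2 * N c - 2 := fun c h1 h2 h3 =>
        hzmin c h1 h2 (by omega)
      intro x hx
      induction x, hx using Int.leInductionDown with
      | base =>
        intro h
        rcases eq_or_lt_of_le h with h | h
        · rw [← h, hNu]; omega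
        · have := hA' m hmA h le_rfl
          omega
      | pred x hx ihx =>
        intro h
        have h1 := ihx (by omega)
        have h2 := hstep (x - 1)
        rw [sub_add_cancel] at h2
        split_ifs at h2 with h3
        · have := hA' x h3 (by omega) hx
          omega
        · omega
    -- the upper part is dense
    have hdenseR : ∀ x, z ≤ x → x < w → 2 * (n - N x) > w - x := by
      intro x hx
      induction x, hx using Int.leInduction with
      | base =>
        intro h
        exact hval z hz huz h (by omega)
      | succ x hx ihx =>
        intro h
        have h1 := ihx (by omega)
        have h2 := hstep x
        split_ifs at h2 with h3
        · have := hval (x + 1) h3 (by omega) h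
          omega
        · omega
    have hNm : m - u < 2 * N m - 2 ∨ m = u := by
      rcases eq_or_lt_of_le hum with h | h
      · exact Or.inr h.symm
      · exact Or.inl (hzmin m hmA h hmz)
    have hNmu : m = u → N m = 1 := fun h => by rw [h, hNu]
    have dL := three_card_sub_one_le L (u := u) (n := m) (q := z) huL hmL
      (fun a ha => ⟨(hA a (Finset.mem_filter.1 ha).1).1, hmmax a ha⟩)
      (fun x h1 h2 => by rw [hNL x (by omega)]; exact hdenseL x h2 h1)
      (by
        rcases hz1 with h | h
        · have : N w = N m + 1 := by rw [← h, hNz]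
          omega
        · omega)
    have dR := three_card_sub_one_le' R (u := z) (n := w) (q := m)
      (Finset.mem_filter.2 ⟨hz, le_rfl⟩) (Finset.mem_filter.2 ⟨hw, hzw⟩)
      (fun a ha => ⟨(Finset.mem_filter.1 ha).2, (hA a (Finset.mem_filter.1 ha).1).2⟩)
      (fun x h1 h2 => by
        have h3 : R.filter (fun a => x ≤ a) = A.filter (fun a => x ≤ a) := by
          rw [hRdef, Finset.filter_filter]
          exact Finset.filter_congr fun a _ => by omega
        rw [h3, hR x]
        rcases eq_or_lt_of_le h1 with h | h
        · rw [← h, hNz1]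
          rcases eq_or_lt_of_le hzw with h4 | h4
          · have : N w = N m + 1 := by rw [← h4, hNz]
            omega
          · have := hdenseR z le_rfl h4
            omega
        · have := hdenseR (x - 1) (by omega) (by omega)
          omega) (by rcases hNm with h | h <;> omega)
    set X := (L + L) ∪ L.image (fun a => z + a) with hX
    set Y := (R + R) ∪ R.image (fun a => m + a) with hY
    have hXY : X ∩ Y ⊆ {z + m} := by
      intro x hx
      rw [Finset.mem_singleton]
      obtain ⟨h1, h2⟩ := Finset.mem_inter.1 hx
      have e1 : x ≤ z + m := by
        rcases Finset.mem_union.1 h1 with h | h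
        · obtain ⟨a, ha, b, hb, rfl⟩ := Finset.mem_add.1 h
          have := hmmax a ha
          have := hmmax b hb
          omega
        · obtain ⟨a, ha, rfl⟩ := Finset.mem_image.1 h
          have := hmmax a ha
          omega
      have e2 : z + m ≤ x := by
        rcases Finset.mem_union.1 h2 with h | h
        · obtain ⟨a, ha, b, hb, rfl⟩ := Finset.mem_add.1 h
          have := (Finset.mem_filter.1 ha).2
          have := (Finset.mem_filter.1 hb).2
          omega
        · obtain ⟨a, ha, rfl⟩ := Finset.mem_image.1 h
          have := (Finset.mem_filter.1 ha).2
          omega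
      omega
    have sL : L ⊆ A := Finset.filter_subset _ _
    have sR : R ⊆ A := Finset.filter_subset _ _
    have hsub : X ∪ Y ⊆ A + A := by
      refine Finset.union_subset (Finset.union_subset (Finset.add_subset_add sL sL) ?_)
        (Finset.union_subset (Finset.add_subset_add sR sR) ?_)
      · intro x hx
        obtain ⟨a, ha, rfl⟩ := Finset.mem_image.1 hx
        exact Finset.add_mem_add hz (sL ha)
      · intro x hx
        obtain ⟨a, ha, rfl⟩ := Finset.mem_image.1 hx
        exact Finset.add_mem_add hmA (sR ha)
    have h1 := Finset.card_le_card hsub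
    have h2 := Finset.card_le_card hXY
    rw [Finset.card_singleton] at h2
    have h3 := Finset.card_union_add_card_inter X Y
    omega

/-! ### Multiples of `μ` away from `0` modulo `p` -/

/-- For `2 ≤ μ ≤ (p - 1) / 2` some multiple `μ * d` with `1 ≤ d ≤ 4N - p - 2` is farther than `p - 2N`
from every multiple of `p`. Multiples of `μ` itself work unless `μ` is near `p / 3`; there the steps
`3μ - p` or `p - 3μ` of the progressions `d = 3j + 1` and `d = 3j + 2` are short and non-zero. -/
lemma exists_multiple_off_short_interval {p N μ : ℤ} (hp : 1000000 ≤ p) (h3 : ¬ (3 : ℤ) ∣ p)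
    (hN : 31294 * p ≤ 100000 * N) (hμ : 2 ≤ μ) (hμp : 2 * μ ≤ p - 1)
    (H : ∀ d, 1 ≤ d → d ≤ 4 * N - p - 2 → ∃ y, |y| ≤ p - 2 * N ∧ p ∣ μ * d - y) : False := by
  have bad : ∀ d i : ℤ, 1 ≤ d → d ≤ 4 * N - p - 2 → p - 2 * N < μ * d - p * i →
      μ * d - p * i < p - (p - 2 * N) → False := by
    intro d i h1 h2 h4 h5
    obtain ⟨y, hy, hdvd⟩ := H d h1 h2
    rw [abs_le] at hy
    have h6 : p ∣ μ * d - p * i - y := by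
      rw [show μ * d - p * i - y = μ * d - y - p * i by ring]
      exact dvd_sub hdvd (dvd_mul_right _ _)
    have := Int.le_of_dvd (by omega) h6
    omega
  -- least multiple of `b` exceeding `a`
  have least : ∀ a b : ℤ, 0 ≤ a → 1 ≤ b → ∃ j, 1 ≤ j ∧ j ≤ a + 1 ∧ a < b * j ∧ b * j ≤ a + b := by
    intro a b ha hb
    refine ⟨a / b + 1, ?_, ?_, ?_, ?_⟩
    · have := Int.ediv_nonneg ha (by omega : 0 ≤ b); omega
    · have := Int.ediv_le_self b ha; omega
    · have := Int.lt_mul_ediv_self_add (x := a) (by omega : 0 < b)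
      rw [mul_add, mul_one]; exact this
    · have := Int.mul_ediv_self_le (x := a) (k := b) (by omega)
      rw [mul_add, mul_one]; omega
  obtain ⟨y, hy, -⟩ := H 1 le_rfl (by omega)
  have hW : 0 ≤ p - 2 * N := (abs_nonneg y).trans hy
  by_cases hsmall : μ ≤ p - 2 * (p - 2 * N) - 1
  · obtain ⟨j, hj1, -, hj3, hj4⟩ := least (p - 2 * N) μ hW (by omega)
    have : 2 * (j - 1) ≤ μ * j - μ := by nlinarith
    exact bad j 0 hj1 (by omega) (by omega) (by omega)
  · have e1 : μ ≤ p - 2 * N := by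
      by_contra hcon
      exact bad 1 0 le_rfl (by omega) (by omega) (by omega)
    have e2 : p - (p - 2 * N) ≤ 2 * μ := by
      by_contra hcon
      exact bad 2 0 (by omega) (by omega) (by omega) (by omega)
    rcases lt_trichotomy (3 * μ) p with h | h | h
    · obtain ⟨j, hj1, hj2, hj3, hj4⟩ := least (2 * μ - (p - (p - 2 * N))) (p - 3 * μ)
        (by omega) (by omega)
      have h5 : μ * (3 * j + 2) - p * j = 2 * μ - (p - 3 * μ) * j := by ring
      exact bad (3 * j + 2) j (by omega) (by omega) (by omega) (by omega)
    · exact h3 ⟨μ, h.symm⟩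
    · obtain ⟨j, hj1, hj2, hj3, hj4⟩ := least (p - 2 * N - μ) (3 * μ - p) (by omega) (by omega)
      have h5 : μ * (3 * j + 1) - p * j = μ + (3 * μ - p) * j := by ring
      exact bad (3 * j + 1) j (by omega) (by omega) (by omega) (by omega)

/-! ### Arc counts and summation by parts -/

section

variable {p : ℕ} [NeZero p]

/-- The function `cos (2πj / p)` on `ZMod p`, as the real part of the standard additive character. -/
noncomputable def cosZ (j : ZMod p) : ℝ := (ZMod.stdAddChar j : ℂ).re

lemma cosZ_intCast (i : ℤ) : cosZ (i : ZMod p) = Real.cos (2 * Real.pi * i / p) := by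
  rw [cosZ, ZMod.stdAddChar_coe, ← Complex.exp_ofReal_mul_I_re]
  congr 2
  push_cast
  ring

/-- The number of elements of `B` in the arc `{j, j + 1, …, j + h - 1}` of `ZMod p`. -/
def arcCount (h : ℕ) (B : Finset (ZMod p)) (j : ZMod p) : ℕ :=
  (B.filter (fun b => (b - j).val < h)).card

omit [NeZero p] in
lemma val_natCast_half {h : ℕ} (hp : p + 1 = 2 * h) (h2 : 2 ≤ h) : ((h : ℕ) : ZMod p).val = h :=
  ZMod.val_natCast_of_lt (by omega)

/-- With `h = (p + 1) / 2`, the arcs of length `h` starting at `j` and at `j + h` cover `ZMod p`. -/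
lemma card_le_arcCount_add {h : ℕ} (hp : p + 1 = 2 * h) (h2 : 2 ≤ h) (B : Finset (ZMod p))
    (j : ZMod p) : B.card ≤ arcCount h B j + arcCount h B (j + h) := by
  rw [← Finset.card_filter_add_card_filter_not (s := B) (fun b => (b - j).val < h)]
  refine Nat.add_le_add_left (Finset.card_le_card fun b hb => ?_) _
  obtain ⟨hb, hv⟩ := Finset.mem_filter.1 hb
  refine Finset.mem_filter.2 ⟨hb, ?_⟩
  have hh := val_natCast_half hp h2
  have := ZMod.val_lt (b - j)
  rw [← sub_sub, ZMod.val_sub (by omega), hh]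
  omega

lemma arcCount_le_succ {h : ℕ} (hp : p + 1 = 2 * h) (h2 : 2 ≤ h) (B : Finset (ZMod p))
    (j : ZMod p) : arcCount h B j ≤ arcCount h B (j + 1) + 1 := by
  refine (Finset.card_le_card fun b hb => ?_).trans (Finset.card_insert_le j _)
  obtain ⟨hb, hv⟩ := Finset.mem_filter.1 hb
  rw [Finset.mem_insert, Finset.mem_filter]
  by_cases h0 : (b - j).val = 0
  · left
    rwa [ZMod.val_eq_zero, sub_eq_zero] at h0
  · right
    have h1 : (1 : ZMod p).val = 1 := ZMod.val_one'' (by omega)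
    refine ⟨hb, ?_⟩
    rw [← sub_sub, ZMod.val_sub (by omega), h1]
    omega

lemma arcCount_succ_le {h : ℕ} (hp : p + 1 = 2 * h) (h2 : 2 ≤ h) (B : Finset (ZMod p))
    (j : ZMod p) : arcCount h B (j + 1) ≤ arcCount h B j + 1 := by
  refine (Finset.card_le_card fun b hb => ?_).trans (Finset.card_insert_le (j + h) _)
  obtain ⟨hb, hv⟩ := Finset.mem_filter.1 hb
  rw [Finset.mem_insert, Finset.mem_filter]
  have h1 : (1 : ZMod p).val = 1 := ZMod.val_one'' (by omega)
  have h3 : (b - j).val = (b - (j + 1)).val + 1 := by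
    rw [show b - j = b - (j + 1) + 1 by ring, ZMod.val_add_of_lt, h1]
    rw [h1]
    omega
  by_cases h4 : (b - j).val < h
  · exact Or.inr ⟨hb, h4⟩
  · left
    have h5 : b - j = (h : ZMod p) := by
      apply ZMod.val_injective
      rw [val_natCast_half hp h2]
      omega
    rw [← h5]
    ring

lemma sum_zmod_eq_sum_range (F : ZMod p → ℝ) :
    ∑ j, F j = ∑ i ∈ Finset.range p, F (i : ZMod p) := by
  refine Finset.sum_nbij' (fun j => j.val) (fun i => (i : ZMod p)) ?_ ?_ ?_ ?_ ?_
  · intro j _; exact Finset.mem_range.2 (ZMod.val_lt j)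
  · intro i _; exact Finset.mem_univ _
  · intro j _; exact ZMod.natCast_zmod_val j
  · intro i hi; exact ZMod.val_natCast_of_lt (Finset.mem_range.1 hi)
  · intro j _; rw [ZMod.natCast_zmod_val]

/-- Summation by parts against the arc counts: for each `b ∈ B` the differences of `s` telescope along
the arcs containing `b`. -/
lemma sum_arcCount_mul_sub {h : ℕ} (hp : p + 1 = 2 * h) (h2 : 2 ≤ h) (B : Finset (ZMod p))
    (s : ZMod p → ℝ) :
    ∑ j, (arcCount h B j : ℝ) * (s j - s (j - 1)) = ∑ b ∈ B, (s b - s (b - h)) := by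
  have h1 : ∀ j, (arcCount h B j : ℝ) * (s j - s (j - 1)) =
      ∑ b ∈ B, if (b - j).val < h then s j - s (j - 1) else 0 := by
    intro j
    rw [← Finset.sum_filter, Finset.sum_const, nsmul_eq_mul]
    rfl
  rw [Finset.sum_congr rfl fun j _ => h1 j, Finset.sum_comm]
  refine Finset.sum_congr rfl fun b _ => ?_
  rw [← Equiv.sum_comp (Equiv.subLeft b)]
  simp only [Equiv.subLeft_apply, sub_sub_cancel]
  rw [sum_zmod_eq_sum_range]
  have h3 : ∑ i ∈ Finset.range p, (if ((i : ℕ) : ZMod p).val < h then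
      s (b - (i : ZMod p)) - s (b - (i : ZMod p) - 1) else 0) =
      ∑ i ∈ Finset.range h, (s (b - ((i : ℕ) : ZMod p)) - s (b - ((i + 1 : ℕ) : ZMod p))) := by
    have h4 : Finset.range h = (Finset.range p).filter (fun i => i < h) := by
      ext i
      simp only [Finset.mem_range, Finset.mem_filter]
      omega
    rw [h4, Finset.sum_filter]
    refine Finset.sum_congr rfl fun i hi => ?_
    rw [ZMod.val_natCast_of_lt (Finset.mem_range.1 hi)]
    push_cast
    rw [sub_sub]
  rw [h3, Finset.sum_range_sub' (fun i : ℕ => s (b - (i : ZMod p)))]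
  simp

/-- The truncation of a real number to `[-σ, σ]`. -/
noncomputable def clamp (σ x : ℝ) : ℝ := max (-σ) (min σ x)

lemma clamp_mono (σ : ℝ) : Monotone (clamp σ) := fun _ _ h =>
  max_le_max le_rfl (min_le_min le_rfl h)

lemma abs_clamp_le {σ : ℝ} (hσ : 0 ≤ σ) (x : ℝ) : |clamp σ x| ≤ σ := by
  rw [abs_le]
  exact ⟨le_max_left _ _, max_le (by linarith) (min_le_left _ _)⟩

/-- Bernoulli's inequality `1 + 16(|x| - 1) ≤ x ^ 16` bounds the excess of `|x|` over `15 / 16`. -/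
lemma abs_sub_clamp_le (x : ℝ) (hx : |x| ≤ 1) : |x - clamp (15 / 16) x| ≤ x ^ 16 / 16 := by
  rw [abs_le] at hx
  have e0 : 0 ≤ x ^ 16 := Even.pow_nonneg (by decide) x
  unfold clamp
  rcases le_total (15 / 16) x with h | h
  · rw [min_eq_left h, max_eq_right (by norm_num), abs_of_nonneg (by linarith)]
    have := one_add_mul_le_pow (a := x - 1) (by linarith) 16
    rw [add_sub_cancel] at this
    push_cast at this
    linarith
  · rw [min_eq_right h]
    rcases le_total (-(15 / 16)) x with h1 | h1
    · rw [max_eq_right h1, sub_self, abs_zero]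
      positivity
    · rw [max_eq_left h1, abs_of_nonpos (by linarith)]
      have := one_add_mul_le_pow (a := -x - 1) (by linarith) 16
      rw [add_sub_cancel, Even.neg_pow (by decide)] at this
      push_cast at this
      linarith

/-- The cosine falls and then rises once around the circle, so its truncation to `[-σ, σ]` has total
variation at most `4σ`. -/
lemma sum_abs_clamp_sub_le {h : ℕ} (hp : p + 1 = 2 * h) (h2 : 2 ≤ h) {σ : ℝ} (hσ : 0 ≤ σ) :
    ∑ j : ZMod p, |clamp σ (cosZ j) - clamp σ (cosZ (j - 1))| ≤ 4 * σ := by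
  rw [← Equiv.sum_comp (Equiv.addRight 1)]
  simp only [Equiv.coe_addRight, add_sub_cancel_right]
  rw [sum_zmod_eq_sum_range]
  set γ : ℕ → ℝ := fun i => clamp σ (Real.cos (2 * Real.pi * i / p)) with hγ
  have hp0 : (0 : ℝ) < p := by exact_mod_cast Nat.pos_of_ne_zero (NeZero.ne p)
  have e1 : ∀ i : ℕ, clamp σ (cosZ ((i : ZMod p) + 1)) = γ (i + 1) := fun i => by
    have := cosZ_intCast (p := p) ((i + 1 : ℕ) : ℤ)
    push_cast at this
    rw [this, hγ]
    push_cast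
    rfl
  have e2 : ∀ i : ℕ, clamp σ (cosZ (i : ZMod p)) = γ i := fun i => by
    have := cosZ_intCast (p := p) (i : ℤ)
    push_cast at this
    rw [this]
  simp only [e1, e2]
  have hb : ∀ i, |γ i| ≤ σ := fun i => abs_clamp_le hσ _
  obtain ⟨e, rfl⟩ : ∃ e, h = e + 1 := ⟨h - 1, by omega⟩
  have hpe : p = e + (e + 1) := by omega
  have hpi := Real.pi_pos
  have hper : (2 * (e : ℝ) + 1) = p := by rw [hpe]; push_cast; ring
  have hdec : ∀ i j : ℕ, i ≤ j → j ≤ e → γ j ≤ γ i := by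
    intro i j hij hj
    apply clamp_mono
    apply Real.cos_le_cos_of_nonneg_of_le_pi (by positivity)
    · rw [div_le_iff₀ hp0]
      have : (j : ℝ) ≤ e := by exact_mod_cast hj
      nlinarith
    · gcongr
  have hsym : ∀ i : ℕ, i ≤ p → γ i = γ (p - i) := by
    intro i hi
    simp only [hγ]
    rw [Nat.cast_sub hi, mul_sub, sub_div, mul_div_assoc _ (p : ℝ), div_self hp0.ne', mul_one,
      Real.cos_two_pi_sub]
  have s1 : ∑ i ∈ Finset.range e, |γ (i + 1) - γ i| = γ 0 - γ e := by
    rw [← Finset.sum_range_sub' γ e]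
    refine Finset.sum_congr rfl fun i hi => ?_
    rw [Finset.mem_range] at hi
    rw [abs_sub_comm, abs_of_nonneg (sub_nonneg.2 (hdec i (i + 1) (by omega) (by omega)))]
  have s2 : ∑ i ∈ Finset.range (e + 1), |γ (e + i + 1) - γ (e + i)| = γ p - γ e := by
    have h3 := Finset.sum_range_sub (fun i => γ (e + i)) (e + 1)
    simp only [add_zero, ← hpe] at h3
    rw [← h3]
    refine Finset.sum_congr rfl fun i hi => ?_
    rw [Finset.mem_range] at hi
    rw [← add_assoc, abs_of_nonneg]
    rw [sub_nonneg]
    rw [hsym (e + i + 1) (by omega)]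
    rcases Nat.eq_zero_or_pos i with h0 | h0
    · rw [h0, show p - (e + 0 + 1) = e + 0 by omega]
    · rw [hsym (e + i) (by omega)]
      exact hdec _ _ (by omega) (by omega)
  have s3 : ∑ i ∈ Finset.range p, |γ (i + 1) - γ i| = (γ 0 - γ e) + (γ p - γ e) := by
    rw [← s1, ← s2]
    conv_lhs => rw [hpe]
    exact Finset.sum_range_add _ _ _
  rw [s3]
  have := abs_le.1 (hb 0)
  have := abs_le.1 (hb e)
  have := abs_le.1 (hb p)
  linarith

end

/-! ### Cosine sums over sets with no crowded half-circle -/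

section

variable {p : ℕ} [NeZero p]

/-- The mean of `cos ^ 16` over the `p`-th roots of unity is the central binomial term
`C(16, 8) / 2 ^ 16`, since no other frequency `2i - 16` is divisible by `p > 16`. -/
lemma sum_cosZ_pow (hp : 16 < p) : ∑ j : ZMod p, cosZ j ^ 16 = p * (12870 / 65536) := by
  have h1 : ∀ j : ZMod p, ((cosZ j : ℝ) : ℂ) ^ 16 = (1 / 65536) * ∑ i ∈ Finset.range 17,
      ZMod.stdAddChar (j * ((2 * i - 16 : ℤ) : ZMod p)) * ((Nat.choose 16 i : ℕ) : ℂ) := by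
    intro j
    rw [cosZ, Complex.re_eq_add_conj, ← AddChar.map_neg_eq_conj, div_pow, add_pow,
      Finset.sum_div, Finset.mul_sum]
    refine Finset.sum_congr rfl fun i hi => ?_
    have hi' : i ≤ 16 := by have := Finset.mem_range.1 hi; omega
    rw [← AddChar.map_nsmul_eq_pow, ← AddChar.map_nsmul_eq_pow, ← AddChar.map_add_eq_mul]
    have : i • j + (16 - i) • (-j) = j * ((2 * i - 16 : ℤ) : ZMod p) := by
      simp only [nsmul_eq_mul]
      rw [Nat.cast_sub hi']
      push_cast
      ring
    rw [this]
    ring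
  have h2 : ∑ j : ZMod p, ((cosZ j : ℝ) : ℂ) ^ 16 = p * (12870 / 65536) := by
    rw [Finset.sum_congr rfl fun j _ => h1 j, ← Finset.mul_sum, Finset.sum_comm]
    simp only [← Finset.sum_mul, AddChar.sum_mulShift _ (ZMod.isPrimitive_stdAddChar p)]
    rw [Finset.sum_eq_single 8]
    · rw [if_pos (by norm_num), ZMod.card, show Nat.choose 16 8 = 12870 by decide]
      push_cast
      ring
    · intro i hi hi8
      have hi' := Finset.mem_range.1 hi
      rw [if_neg]
      · simp
      · intro h0
        rw [ZMod.intCast_zmod_eq_zero_iff_dvd] at h0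
        obtain ⟨c, hc⟩ := h0
        have hpz : (16 : ℤ) < p := by exact_mod_cast hp
        rcases lt_trichotomy c 0 with h | h | h
        · nlinarith
        · subst h; omega
        · nlinarith
    · intro h
      exact absurd (Finset.mem_range.2 (by norm_num)) h
  apply Complex.ofReal_injective
  push_cast
  exact h2

lemma abs_cosZ_le_one (j : ZMod p) : |cosZ j| ≤ 1 := by
  rw [← AddChar.norm_apply (ZMod.stdAddChar : AddChar (ZMod p) ℂ) j]
  exact Complex.abs_re_le_norm _

/-- Translation by `h = (p + 1) / 2` is almost a half-turn. -/
lemma cosZ_sub_half_le {h : ℕ} (hp : p + 1 = 2 * h) (b : ZMod p) :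
    cosZ (b - (h : ZMod p)) ≤ Real.pi / p - cosZ b := by
  have hp0 : (0 : ℝ) < p := by exact_mod_cast Nat.pos_of_ne_zero (NeZero.ne p)
  have hpc : (p : ℂ) ≠ 0 := by exact_mod_cast NeZero.ne p
  have hh : (2 : ℂ) * h = p + 1 := by exact_mod_cast hp.symm
  set E : ℂ := Complex.exp (Complex.I * ((-(Real.pi / p) : ℝ) : ℂ)) with hE
  have h1 : (ZMod.stdAddChar (-(h : ZMod p)) : ℂ) = -E := by
    have := ZMod.stdAddChar_coe (N := p) (-(h : ℤ))
    push_cast at this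
    have hneg : ∀ x : ℂ, -Complex.exp x = Complex.exp (Real.pi * Complex.I + x) := fun x => by
      rw [Complex.exp_add, Complex.exp_pi_mul_I, neg_one_mul]
    rw [this, hE, hneg]
    rw [Complex.exp_eq_exp_iff_exists_int]
    refine ⟨-1, ?_⟩
    push_cast
    field_simp
    linear_combination -hh
  have h2 : ‖E - 1‖ ≤ Real.pi / p := by
    refine Real.norm_exp_I_mul_ofReal_sub_one_le.trans ?_
    rw [norm_neg, Real.norm_of_nonneg (by positivity)]
  have h3 : cosZ (b - (h : ZMod p)) = -cosZ b - (ZMod.stdAddChar b * (E - 1)).re := by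
    rw [cosZ, sub_eq_add_neg b, AddChar.map_add_eq_mul, h1, cosZ, ← Complex.neg_re,
      ← Complex.sub_re]
    congr 1
    ring
  have h4 : |(ZMod.stdAddChar b * (E - 1)).re| ≤ Real.pi / p := by
    refine (Complex.abs_re_le_norm _).trans ?_
    rw [norm_mul, AddChar.norm_apply, one_mul]
    exact h2
  have := abs_le.1 h4
  linarith

/-- A bound, in the spirit of Lev, for the cosine sum of a set having at most `k` elements in each
half-circle. The sum is written by parts against the centred arc counts, which are bounded by
`k - |B| / 2` and change by at most `1` per step; the first bound is used with the total variation of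
the cosine truncated at `15 / 16`, the second with the mean of what the truncation cuts off. -/
lemma sum_cosZ_le {h : ℕ} (hp : p + 1 = 2 * h) (hp16 : 16 < p) (B : Finset (ZMod p)) {k : ℕ}
    (hk : ∀ j, arcCount h B j ≤ k) :
    ∑ b ∈ B, cosZ b ≤ 15 / 16 * (2 * k - B.card) + p * (12870 / 65536) / 32 + 2 := by
  have h2 : 2 ≤ h := by omega
  have hp0 : (0 : ℝ) < p := by exact_mod_cast Nat.pos_of_ne_zero (NeZero.ne p)
  have hBp : (B.card : ℝ) ≤ p := by
    have := Finset.card_le_univ B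
    rw [ZMod.card] at this
    exact_mod_cast this
  have low : 2 * ∑ b ∈ B, cosZ b - 4 ≤ ∑ b ∈ B, (cosZ b - cosZ (b - (h : ZMod p))) := by
    have h1 : ∑ b ∈ B, (2 * cosZ b - Real.pi / p) ≤ ∑ b ∈ B, (cosZ b - cosZ (b - (h : ZMod p))) :=
      Finset.sum_le_sum fun b _ => by have := cosZ_sub_half_le hp b; linarith
    rw [Finset.sum_sub_distrib, ← Finset.mul_sum, Finset.sum_const, nsmul_eq_mul] at h1
    have h3 : (B.card : ℝ) * (Real.pi / p) ≤ 4 := by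
      rw [mul_div_assoc', div_le_iff₀ hp0]
      have := Real.pi_le_four
      have := Real.pi_pos
      nlinarith
    linarith
  rw [← sum_arcCount_mul_sub hp h2 B cosZ] at low
  -- centre the arc counts
  set g : ZMod p → ℝ := fun j => arcCount h B j - B.card / 2 with hg
  set c : ZMod p → ℝ := fun j => clamp (15 / 16) (cosZ j) with hc
  have shift : ∀ F : ZMod p → ℝ, ∑ j, F (j - 1) = ∑ j, F j := fun F =>
    Equiv.sum_comp (Equiv.subRight (1 : ZMod p)) F
  have e1 : ∑ j, (arcCount h B j : ℝ) * (cosZ j - cosZ (j - 1)) =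
      ∑ j, g j * (c j - c (j - 1)) + ∑ j, (g j - g (j + 1)) * (cosZ j - c j) := by
    have t1 : ∑ j : ZMod p, (cosZ j - cosZ (j - 1)) = 0 := by
      rw [Finset.sum_sub_distrib, shift cosZ, sub_self]
    have t2 : ∑ j, g j * (cosZ (j - 1) - c (j - 1)) = ∑ j, g (j + 1) * (cosZ j - c j) := by
      rw [← shift (fun j => g (j + 1) * (cosZ j - c j))]
      simp only [sub_add_cancel]
    have t3 : ∑ j, (arcCount h B j : ℝ) * (cosZ j - cosZ (j - 1)) =
        ∑ j, g j * (cosZ j - cosZ (j - 1)) + (B.card / 2) * ∑ j : ZMod p, (cosZ j - cosZ (j - 1)) := by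
      rw [Finset.mul_sum, ← Finset.sum_add_distrib]
      refine Finset.sum_congr rfl fun j _ => ?_
      rw [hg]
      ring
    rw [t3, t1, mul_zero, add_zero]
    have t4 : ∑ j, (g j - g (j + 1)) * (cosZ j - c j) =
        ∑ j, g j * (cosZ j - c j) - ∑ j, g j * (cosZ (j - 1) - c (j - 1)) := by
      rw [t2, ← Finset.sum_sub_distrib]
      exact Finset.sum_congr rfl fun j _ => by ring
    rw [t4, ← Finset.sum_sub_distrib, ← Finset.sum_add_distrib]
    exact Finset.sum_congr rfl fun j _ => by ring
  have hgG : ∀ j, |g j| ≤ k - B.card / 2 := by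
    intro j
    have h1 : (arcCount h B j : ℝ) ≤ k := by exact_mod_cast hk j
    have h3 : (B.card : ℝ) ≤ arcCount h B j + k := by
      have := (card_le_arcCount_add hp h2 B j).trans (Nat.add_le_add_left (hk (j + h)) _)
      exact_mod_cast this
    rw [abs_le, hg]
    constructor <;> simp only <;> linarith
  have hG : (0 : ℝ) ≤ k - B.card / 2 := (abs_nonneg _).trans (hgG 0)
  have e2 : ∑ j, g j * (c j - c (j - 1)) ≤ (k - B.card / 2) * (4 * (15 / 16)) := by
    calc ∑ j, g j * (c j - c (j - 1)) ≤ ∑ j, (k - B.card / 2 : ℝ) * |c j - c (j - 1)| := by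
          refine Finset.sum_le_sum fun j _ => (le_abs_self _).trans ?_
          rw [abs_mul]
          exact mul_le_mul_of_nonneg_right (hgG j) (abs_nonneg _)
      _ ≤ _ := by
          rw [← Finset.mul_sum]
          exact mul_le_mul_of_nonneg_left (sum_abs_clamp_sub_le hp h2 (by norm_num)) hG
  have e3 : ∑ j, (g j - g (j + 1)) * (cosZ j - c j) ≤ p * (12870 / 65536) / 16 := by
    calc ∑ j, (g j - g (j + 1)) * (cosZ j - c j) ≤ ∑ j : ZMod p, cosZ j ^ 16 / 16 := by
          refine Finset.sum_le_sum fun j _ => (le_abs_self _).trans ?_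
          rw [abs_mul]
          refine le_trans ?_ (abs_sub_clamp_le (cosZ j) (abs_cosZ_le_one j))
          refine mul_le_of_le_one_left (abs_nonneg _) ?_
          have h1 : (arcCount h B j : ℝ) ≤ arcCount h B (j + 1) + 1 := by
            exact_mod_cast arcCount_le_succ hp h2 B j
          have h3 : (arcCount h B (j + 1) : ℝ) ≤ arcCount h B j + 1 := by
            exact_mod_cast arcCount_succ_le hp h2 B j
          rw [abs_le, hg]
          constructor <;> simp only <;> linarith
      _ = _ := by rw [← Finset.sum_div, sum_cosZ_pow hp16]
  linarith

/-- Multiplication by a suitable `p`-th root of unity brings `S` within `π / p` of the positive real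
axis. -/
lemma exists_rotate (hp : 5 ≤ p) (S : ℂ) (hS : ‖S‖ ≤ p) :
    ∃ t : ZMod p, ‖S‖ - 1 ≤ (ZMod.stdAddChar t * S).re := by
  have hp0 : (0 : ℝ) < p := by exact_mod_cast Nat.pos_of_ne_zero (NeZero.ne p)
  have hp5 : (5 : ℝ) ≤ p := by exact_mod_cast hp
  have hpi := Real.pi_pos
  have hpi2 : Real.pi ^ 2 ≤ 10 := by
    have := Real.pi_lt_d2
    nlinarith
  set n : ℤ := round (-(S.arg * p / (2 * Real.pi))) with hn
  set δ : ℝ := 2 * Real.pi * n / p + S.arg with hδ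
  have h1 : |δ| ≤ Real.pi / p := by
    have h2 := abs_sub_round (-(S.arg * p / (2 * Real.pi)))
    rw [← hn] at h2
    have h3 : δ = -(2 * Real.pi / p) * (-(S.arg * p / (2 * Real.pi)) - n) := by
      rw [hδ]; field_simp; ring
    rw [h3, abs_mul, abs_neg, abs_of_nonneg (by positivity)]
    calc 2 * Real.pi / p * |(-(S.arg * p / (2 * Real.pi)) - n)| ≤ 2 * Real.pi / p * (1 / 2) := by
          gcongr
      _ = Real.pi / p := by ring
  refine ⟨n, ?_⟩
  have h4 : (ZMod.stdAddChar (n : ZMod p) * S).re = ‖S‖ * Real.cos δ := by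
    rw [ZMod.stdAddChar_coe]
    conv_lhs => rw [← Complex.norm_mul_exp_arg_mul_I S]
    rw [← Complex.exp_ofReal_mul_I_re, ← Complex.re_ofReal_mul]
    congr 1
    rw [mul_left_comm, ← Complex.exp_add, hδ]
    congr 2
    push_cast
    ring
  rw [h4]
  have h5 : δ ^ 2 ≤ (Real.pi / p) ^ 2 := by rw [← sq_abs]; gcongr
  have h6 := Real.one_sub_sq_div_two_le_cos (x := δ)
  have h7 : (p : ℝ) * (Real.pi / p) ^ 2 ≤ 2 := by
    rw [div_pow, mul_div_assoc', div_le_iff₀ (by positivity)]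
    nlinarith
  have h8 : ‖S‖ * (δ ^ 2 / 2) ≤ 1 := by
    calc ‖S‖ * (δ ^ 2 / 2) ≤ p * ((Real.pi / p) ^ 2 / 2) := by gcongr
      _ ≤ 1 := by linarith
  have h9 : ‖S‖ * (1 - δ ^ 2 / 2) ≤ ‖S‖ * Real.cos δ :=
    mul_le_mul_of_nonneg_left h6 (norm_nonneg _)
  linarith

end

/-! ### Counting solutions by exponential sums -/

section

variable {p : ℕ} [NeZero p]

/-- The exponential sum `∑ a ∈ A, e(ra / p)`, that is, the Fourier transform of the indicator function
of `A` at `-r`. -/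
noncomputable def expSum (A : Finset (ZMod p)) (r : ZMod p) : ℂ :=
  ∑ a ∈ A, (ZMod.stdAddChar (r * a) : ℂ)

lemma norm_expSum_le (A : Finset (ZMod p)) (r : ZMod p) : ‖expSum A r‖ ≤ A.card := by
  refine (norm_sum_le _ _).trans ?_
  simp [AddChar.norm_apply]

lemma expSum_zero (A : Finset (ZMod p)) : expSum A 0 = A.card := by
  simp [expSum]

lemma sum_stdAddChar_mul (b : ZMod p) :
    ∑ r : ZMod p, (ZMod.stdAddChar (r * b) : ℂ) = if b = 0 then (p : ℂ) else 0 := by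
  rw [AddChar.sum_mulShift b (ZMod.isPrimitive_stdAddChar p), ZMod.card]
  split_ifs <;> simp

/-- Parseval's identity. -/
lemma sum_norm_sq_expSum (A : Finset (ZMod p)) :
    ∑ r : ZMod p, ‖expSum A r‖ ^ 2 = p * A.card := by
  have h : ∑ r : ZMod p, ((‖expSum A r‖ ^ 2 : ℝ) : ℂ) = p * A.card := by
    have h1 : ∀ r : ZMod p, ((‖expSum A r‖ ^ 2 : ℝ) : ℂ) =
        ∑ x ∈ A, ∑ y ∈ A, ZMod.stdAddChar (r * (x - y)) := by
      intro r
      rw [Complex.ofReal_pow, ← Complex.mul_conj', expSum, map_sum, Finset.sum_mul_sum]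
      refine Finset.sum_congr rfl fun x _ => Finset.sum_congr rfl fun y _ => ?_
      rw [← AddChar.map_neg_eq_conj, ← AddChar.map_add_eq_mul]
      congr 1
      ring
    rw [Finset.sum_congr rfl fun r _ => h1 r, Finset.sum_comm]
    have h2 : ∀ x ∈ A, ∑ r : ZMod p, ∑ y ∈ A, (ZMod.stdAddChar (r * (x - y)) : ℂ) = p := by
      intro x hx
      rw [Finset.sum_comm]
      simp only [sum_stdAddChar_mul, sub_eq_zero]
      rw [Finset.sum_ite_eq, if_pos hx]
    rw [Finset.sum_congr rfl h2, Finset.sum_const, nsmul_eq_mul, mul_comm]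
  apply Complex.ofReal_injective
  push_cast at h ⊢
  exact h

/-- The sum is `p` times the number of solutions of `x + y = c * z` in `A`. -/
lemma sum_expSum_eq_zero (A : Finset (ZMod p)) (c : ZMod p)
    (hA : ∀ x ∈ A, ∀ y ∈ A, ∀ z ∈ A, x + y ≠ c * z) :
    ∑ r : ZMod p, expSum A r * expSum A r * (starRingEnd ℂ) (expSum A (c * r)) = 0 := by
  have h1 : ∀ r : ZMod p, expSum A r * expSum A r * (starRingEnd ℂ) (expSum A (c * r)) =
      ∑ x ∈ A, ∑ y ∈ A, ∑ z ∈ A, ZMod.stdAddChar (r * (x + y - c * z)) := by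
    intro r
    rw [expSum, expSum, map_sum, Finset.sum_mul_sum, Finset.sum_mul]
    refine Finset.sum_congr rfl fun x _ => ?_
    rw [Finset.sum_mul]
    refine Finset.sum_congr rfl fun y _ => ?_
    rw [Finset.mul_sum]
    refine Finset.sum_congr rfl fun z _ => ?_
    rw [← AddChar.map_neg_eq_conj, ← AddChar.map_add_eq_mul, ← AddChar.map_add_eq_mul]
    congr 1
    ring
  rw [Finset.sum_congr rfl fun r _ => h1 r, Finset.sum_comm]
  refine Finset.sum_eq_zero fun x hx => ?_
  rw [Finset.sum_comm]
  refine Finset.sum_eq_zero fun y hy => ?_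
  rw [Finset.sum_comm]
  refine Finset.sum_eq_zero fun z hz => ?_
  rw [sum_stdAddChar_mul, if_neg (sub_ne_zero.2 (hA x hx y hy z hz))]

/-- The image `r * A + t` of `A` under an affine map of `ZMod p`. -/
def affineImage (A : Finset (ZMod p)) (r t : ZMod p) : Finset (ZMod p) :=
  A.image (fun a => r * a + t)

omit [NeZero p] in
lemma affine_injective [Fact p.Prime] {r : ZMod p} (hr : r ≠ 0) (t : ZMod p) :
    Function.Injective (fun a => r * a + t) := fun a b h => by
  simpa [hr] using h

omit [NeZero p] in
lemma card_affineImage [Fact p.Prime] (A : Finset (ZMod p)) {r : ZMod p} (hr : r ≠ 0)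
    (t : ZMod p) : (affineImage A r t).card = A.card :=
  Finset.card_image_of_injective _ (affine_injective hr t)

omit [NeZero p] in
lemma arcCount_affineImage [Fact p.Prime] (A : Finset (ZMod p)) (h : ℕ) (r t j : ZMod p) :
    arcCount h (affineImage A r t) j = arcCount h (affineImage A r (t - j)) 0 := by
  unfold arcCount
  have : (affineImage A r (t - j)).filter (fun b => (b - 0).val < h) =
      ((affineImage A r t).filter (fun b => (b - j).val < h)).image (fun b => b - j) := by
    ext b
    simp only [affineImage, Finset.mem_filter, Finset.mem_image, sub_zero]
    constructor
    · rintro ⟨⟨a, ha, rfl⟩, hb⟩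
      refine ⟨r * a + t, ⟨⟨a, ha, rfl⟩, ?_⟩, by ring⟩
      rwa [add_sub_assoc]
    · rintro ⟨b', ⟨⟨a, ha, rfl⟩, hb⟩, rfl⟩
      exact ⟨⟨a, ha, by ring⟩, hb⟩
  rw [this, Finset.card_image_of_injective _ (sub_left_injective)]

/-- If `A` has no solution of `x + y = c * z` and more than `p / 3.1955` elements, some affine image of
`A` has more than `(p - |A| + 3) / 3` elements in a half-circle. Otherwise all nontrivial exponential
sums are at most `M` by `sum_cosZ_le`, and counting solutions gives `|A|² ≤ M (p - |A|)`, which fails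
for this density. -/
theorem exists_large_half_arc [Fact p.Prime] {h : ℕ} (hp : p + 1 = 2 * h) (hpl : 1000000 ≤ p)
    (A : Finset (ZMod p)) {c : ZMod p} (hc : c ≠ 0)
    (hA : ∀ x ∈ A, ∀ y ∈ A, ∀ z ∈ A, x + y ≠ c * z) (hN : (p : ℝ) < 3.1955 * A.card) :
    ∃ r t : ZMod p, r ≠ 0 ∧ p + 4 ≤ A.card + 3 * arcCount h (affineImage A r t) 0 := by
  by_contra! hcon
  have hNp : A.card ≤ p := by
    have := Finset.card_le_univ A
    rwa [ZMod.card] at this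
  have hp0 : (0 : ℝ) < p := by exact_mod_cast Nat.pos_of_ne_zero (NeZero.ne p)
  set N : ℝ := (A.card : ℝ) with hNdef
  have hN0 : 0 < N := by nlinarith
  have hNpR : N ≤ p := by rw [hNdef]; exact_mod_cast hNp
  set k : ℕ := (p - A.card + 3) / 3 with hk
  have hkR : (3 : ℝ) * k ≤ p - N + 3 := by
    have h1 : 3 * k + A.card ≤ p + 3 := by omega
    have h2 : (3 : ℝ) * k + A.card ≤ p + 3 := by exact_mod_cast h1
    linarith
  set M : ℝ := 15 / 16 * (2 * k - N) + p * (12870 / 65536) / 32 + 3 with hM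
  -- all nontrivial exponential sums are at most `M`
  have hS : ∀ r : ZMod p, r ≠ 0 → ‖expSum A r‖ ≤ M := by
    intro r hr
    obtain ⟨t, ht⟩ := exists_rotate (by omega) (expSum A r) ((norm_expSum_le A r).trans hNpR)
    have h1 := sum_cosZ_le hp (by omega) (affineImage A r t) (k := k) (fun j => by
      rw [arcCount_affineImage]
      have := hcon r (t - j) hr
      omega)
    rw [card_affineImage A hr] at h1
    have h2 : ∑ b ∈ affineImage A r t, cosZ b = (ZMod.stdAddChar t * expSum A r).re := by
      rw [affineImage, Finset.sum_image (fun a _ b _ hab => affine_injective hr t hab), expSum,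
        Finset.mul_sum, Complex.re_sum]
      refine Finset.sum_congr rfl fun a _ => ?_
      rw [cosZ, ← AddChar.map_add_eq_mul, add_comm]
    rw [h2] at h1
    linarith
  have hsum := sum_expSum_eq_zero A c hA
  have hpar := sum_norm_sq_expSum A
  rw [← Finset.add_sum_erase _ _ (Finset.mem_univ (0 : ZMod p))] at hsum hpar
  rw [mul_zero, expSum_zero, Complex.conj_natCast] at hsum
  rw [expSum_zero, Complex.norm_natCast] at hpar
  have h3 : N ^ 3 ≤ M * (p * N - N ^ 2) := by
    have h4 : ((A.card : ℂ)) * A.card * A.card = -∑ r ∈ Finset.univ.erase (0 : ZMod p),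
        expSum A r * expSum A r * (starRingEnd ℂ) (expSum A (c * r)) :=
      eq_neg_of_add_eq_zero_left hsum
    have h5 := congrArg norm h4
    rw [norm_neg, norm_mul, norm_mul, Complex.norm_natCast] at h5
    calc N ^ 3 = N * N * N := by ring
      _ = _ := h5
      _ ≤ ∑ r ∈ Finset.univ.erase (0 : ZMod p), M * ‖expSum A r‖ ^ 2 := by
        refine (norm_sum_le _ _).trans (Finset.sum_le_sum fun r hr => ?_)
        rw [norm_mul, norm_mul, RCLike.norm_conj, ← sq, mul_comm]
        refine mul_le_mul_of_nonneg_right (hS _ (mul_ne_zero hc ?_)) (by positivity)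
        exact Finset.ne_of_mem_erase hr
      _ = M * (p * N - N ^ 2) := by
        rw [← Finset.mul_sum]
        congr 1
        linarith
  have h6 : N ^ 2 ≤ M * (p - N) := by
    have : N * N ^ 2 ≤ N * (M * (p - N)) := by linarith
    exact le_of_mul_le_mul_left this hN0
  have hplR : (1000000 : ℝ) ≤ p := by exact_mod_cast hpl
  have h7 : M ≤ 0.6311423 * p - 1.5625 * N := by rw [hM]; linarith
  have h8 : N ^ 2 ≤ (0.6311423 * p - 1.5625 * N) * (p - N) :=
    h6.trans (mul_le_mul_of_nonneg_right h7 (by linarith))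
  nlinarith [mul_nonneg (by linarith : 0 ≤ 3.1955 * N - p) (by linarith : 0 ≤ p - N),
    mul_pos (by linarith : 0 < 3.1955 * N - p) hp0]

end

/-! ### From a crowded half-circle to a contradiction -/

section

/-- A set of integers with at least two elements is the image of a set whose differences are
coprime under an increasing affine map; the dilation factor divides every difference, so it is
less than `D`. -/
lemma exists_gcdOne_preimage (T : Finset ℤ) (hT : 2 ≤ T.card) {D : ℤ}
    (hD : ∀ a ∈ T, ∀ b ∈ T, a - b < D) :
    ∃ (d u : ℤ) (S : Finset ℤ), 1 ≤ d ∧ d < D ∧ GcdOne S ∧ T = S.image (fun a => u + d * a) := by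
  obtain ⟨u, hu, v, hv, huv⟩ := Finset.one_lt_card.1 hT
  set d := T.gcd (fun a => a - u) with hd
  have hdvd : ∀ a ∈ T, d ∣ a - u := fun a ha => Finset.gcd_dvd ha
  have hd0 : d ≠ 0 := by
    intro h0
    have := hdvd v hv
    rw [h0, zero_dvd_iff] at this
    omega
  have hdn : 0 ≤ d := by
    have : normalize d = d := Finset.normalize_gcd
    rw [← this, ← Int.abs_eq_normalize]
    exact abs_nonneg d
  refine ⟨d, u, T.image (fun a => (a - u) / d), by omega, ?_, ?_, ?_⟩
  · rcases lt_or_gt_of_ne huv with h | h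
    · exact (Int.le_of_dvd (by omega) (hdvd v hv)).trans_lt (hD v hv u hu)
    · have h1 := dvd_sub_comm.1 (hdvd v hv)
      exact (Int.le_of_dvd (by omega) h1).trans_lt (hD u hu v hv)
  · intro e he
    by_contra! hcon
    have h1 : e * d ∣ d := by
      rw [hd]
      refine Finset.dvd_gcd fun a ha => ?_
      rw [← hd]
      have h2 := hcon _ (Finset.mem_image_of_mem _ ha) _ (Finset.mem_image_of_mem _ hu)
      rw [sub_self, Int.zero_ediv, sub_zero] at h2
      have h3 := mul_dvd_mul_right h2 d
      rwa [Int.ediv_mul_cancel (hdvd a ha)] at h3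
    have h4 : e ∣ 1 := by
      have : e * d ∣ 1 * d := by rwa [one_mul]
      exact (mul_dvd_mul_iff_right hd0).1 this
    have := Int.le_of_dvd one_pos h4
    omega
  · rw [Finset.image_image]
    refine (Finset.image_id.symm.trans (Finset.image_congr fun a ha => ?_))
    simp only [id, Function.comp]
    rw [Int.mul_ediv_cancel' (hdvd a ha)]
    ring

lemma card_image_add_image (S : Finset ℤ) {d : ℤ} (hd : d ≠ 0) (u : ℤ) :
    (S.image (fun a => u + d * a) + S.image (fun a => u + d * a)).card = (S + S).card := by
  have : S.image (fun a => u + d * a) + S.image (fun a => u + d * a) =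
      (S + S).image (fun a => 2 * u + d * a) := by
    ext x
    simp only [Finset.mem_add, Finset.mem_image]
    constructor
    · rintro ⟨_, ⟨a, ha, rfl⟩, _, ⟨b, hb, rfl⟩, rfl⟩
      exact ⟨a + b, ⟨a, ha, b, hb, rfl⟩, by ring⟩
    · rintro ⟨_, ⟨a, ha, b, hb, rfl⟩, rfl⟩
      exact ⟨_, ⟨a, ha, rfl⟩, _, ⟨b, hb, rfl⟩, by ring⟩
  rw [this, Finset.card_image_of_injective]
  intro a b hab
  simpa [hd] using hab

lemma intCast_injOn {p : ℕ} {a b : ℤ} (ha : 0 ≤ a) (hap : a < p) (hb : 0 ≤ b) (hbp : b < p)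
    (h : (a : ZMod p) = b) : a = b := by
  have := (ZMod.intCast_eq_intCast_iff' a b p).1 h
  rwa [Int.emod_eq_of_lt ha hap, Int.emod_eq_of_lt hb hbp] at this

variable {p : ℕ}

/-- The condition `x + y ≠ c * z` on `A`, transported to an affine image of `A`. -/
lemma affineImage_avoid [Fact p.Prime] {A : Finset (ZMod p)} {c r : ZMod p} (hr : r ≠ 0)
    (t : ZMod p) (hA : ∀ x ∈ A, ∀ y ∈ A, ∀ z ∈ A, x + y ≠ c * z) :
    ∀ x ∈ affineImage A r t, ∀ y ∈ affineImage A r t, ∀ z ∈ affineImage A r t,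
      x + y ≠ c * z + (2 - c) * t := by
  intro x hx y hy z hz h
  obtain ⟨x, hx', rfl⟩ := Finset.mem_image.1 hx
  obtain ⟨y, hy', rfl⟩ := Finset.mem_image.1 hy
  obtain ⟨z, hz', rfl⟩ := Finset.mem_image.1 hz
  refine hA x hx' y hy' z hz' (mul_left_cancel₀ hr ?_)
  linear_combination h

/-- If all residues of `B` are less than `q`, at most `q - h` of them are not counted by the arc
`[0, h)`. -/
lemma card_le_arcCount_add_sub [NeZero p] (B : Finset (ZMod p)) (h q : ℕ)
    (hB : ∀ b ∈ B, b.val < q) : B.card ≤ arcCount h B 0 + (q - h) := by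
  rw [arcCount, ← Finset.card_filter_add_card_filter_not (s := B) (fun b => (b - 0).val < h)]
  refine Nat.add_le_add_left ?_ _
  rw [← Nat.card_Ico]
  refine Finset.card_le_card_of_injOn ZMod.val (fun b hb => ?_)
    (fun a _ b _ hab => ZMod.val_injective p hab)
  have hb' := Finset.mem_filter.1 hb
  rw [sub_zero] at hb'
  exact Finset.mem_coe.2 (Finset.mem_Ico.2 ⟨not_lt.1 hb'.2, hB b hb'.1⟩)

lemma val_lt_of_avoid [NeZero p] {x y : ℤ} (w : ZMod p) (hw : ∀ i : ℤ, x ≤ i → i < y → w ≠ i) :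
    ((w - y).val : ℤ) < p - (y - x) := by
  by_contra! hcon
  have h1 : ((w - y).val : ℤ) < p := by exact_mod_cast ZMod.val_lt _
  refine hw (y + (w - y).val - p) (by omega) (by omega) ?_
  push_cast
  rw [ZMod.natCast_zmod_val, ZMod.natCast_self]
  ring

/-- No set of density above `1 / 3.1955` avoids `x + y = c * z` when `±c` is represented by an integer
`μ` with `2 ≤ μ ≤ (p - 1) / 2`. -/
theorem false_of_dense [Fact p.Prime] (hpl : 1000000 ≤ p) (A : Finset (ZMod p)) {c : ZMod p}
    (hc : c ≠ 0) (hA : ∀ x ∈ A, ∀ y ∈ A, ∀ z ∈ A, x + y ≠ c * z)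
    (hN : (p : ℝ) < 3.1955 * A.card) {μ : ℤ} (hμ : 2 ≤ μ) (hμp : 2 * μ ≤ p - 1)
    (hμc : (μ : ZMod p) = c ∨ (μ : ZMod p) = -c) : False := by
  have hprime : p.Prime := Fact.out
  have hN' : 31294 * p ≤ 100000 * A.card := by
    have hp0 : (0 : ℝ) ≤ p := Nat.cast_nonneg p
    have : (31294 : ℝ) * p ≤ 100000 * A.card := by nlinarith
    exact_mod_cast this
  obtain ⟨h, hp⟩ : ∃ h, p + 1 = 2 * h := by
    obtain ⟨j, hj⟩ := hprime.odd_of_ne_two (by omega)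
    exact ⟨j + 1, by omega⟩
  -- the affine image with the largest half-arc
  obtain ⟨⟨r, t⟩, hrt, hmax⟩ := Finset.exists_max_image
    (Finset.univ.filter (fun q : ZMod p × ZMod p => q.1 ≠ 0))
    (fun q => arcCount h (affineImage A q.1 q.2) 0) ⟨(1, 0), by simp⟩
  have hr : r ≠ 0 := by simpa using hrt
  have hmax' : ∀ r' t' : ZMod p, r' ≠ 0 →
      arcCount h (affineImage A r' t') 0 ≤ arcCount h (affineImage A r t) 0 :=
    fun r' t' hr' => hmax (r', t') (by simpa using hr')
  set B := affineImage A r t with hB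
  set k := arcCount h B 0 with hk
  have hk3 : p + 4 ≤ A.card + 3 * k := by
    obtain ⟨r', t', hr', h1⟩ := exists_large_half_arc hp hpl A hc hA hN
    have := hmax' r' t' hr'
    omega
  have hBcard : B.card = A.card := card_affineImage A hr t
  have hkN : k ≤ A.card := hBcard ▸ Finset.card_filter_le _ _
  have hBavoid := affineImage_avoid hr t hA
  rw [← hB] at hBavoid
  set T : Finset ℤ := (B.filter (fun b => (b - 0).val < h)).image (fun b => (b.val : ℤ)) with hT
  have hTcard : T.card = k := by
    rw [hT, Finset.card_image_of_injective, hk, arcCount]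
    exact fun a b hab => ZMod.val_injective p (by exact_mod_cast hab)
  have hTmem : ∀ a ∈ T, 0 ≤ a ∧ a < h ∧ (a : ZMod p) ∈ B := by
    intro a ha
    obtain ⟨b, hb, rfl⟩ := Finset.mem_image.1 ha
    obtain ⟨hb1, hb2⟩ := Finset.mem_filter.1 hb
    rw [sub_zero] at hb2
    refine ⟨by positivity, by exact_mod_cast hb2, ?_⟩
    rwa [Int.cast_natCast, ZMod.natCast_zmod_val]
  have hTT : (T + T).card + A.card ≤ p := by
    have hinj : ((T + T).image (fun a : ℤ => (a : ZMod p))).card = (T + T).card := by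
      refine Finset.card_image_of_injOn ?_
      intro a ha b hb hab
      obtain ⟨a1, ha1, a2, ha2, rfl⟩ := Finset.mem_add.1 (Finset.mem_coe.1 ha)
      obtain ⟨b1, hb1, b2, hb2, rfl⟩ := Finset.mem_add.1 (Finset.mem_coe.1 hb)
      have h1 := hTmem _ ha1
      have h2 := hTmem _ ha2
      have h3 := hTmem _ hb1
      have h4 := hTmem _ hb2
      exact intCast_injOn (p := p) (by omega) (by omega) (by omega) (by omega) hab
    have hdisj : Disjoint ((T + T).image (fun a : ℤ => (a : ZMod p)))
        (affineImage B c ((2 - c) * t)) := by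
      rw [Finset.disjoint_left]
      intro x hx hx'
      obtain ⟨a, ha, rfl⟩ := Finset.mem_image.1 hx
      obtain ⟨a1, ha1, a2, ha2, rfl⟩ := Finset.mem_add.1 ha
      obtain ⟨z, hz, hz'⟩ := Finset.mem_image.1 hx'
      refine hBavoid _ (hTmem _ ha1).2.2 _ (hTmem _ ha2).2.2 z hz ?_
      rw [hz']
      push_cast
      rfl
    have := Finset.card_le_univ ((T + T).image (fun a : ℤ => (a : ZMod p)) ∪
      affineImage B c ((2 - c) * t))
    rwa [Finset.card_union_of_disjoint hdisj, hinj, card_affineImage B hc, hBcard,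
      ZMod.card] at this
  -- pass to a dilate with coprime differences and apply Freiman's theorem
  obtain ⟨d, u, S, hd1, hdp, hS, hTS⟩ := exists_gcdOne_preimage T (by omega) (D := p)
    (fun a ha b hb => by have := hTmem a ha; have := hTmem b hb; omega)
  have hScard : S.card = k := by
    rw [← hTcard, hTS, Finset.card_image_of_injective]
    intro a b hab
    have : d ≠ 0 := by omega
    simpa [this] using hab
  have hSS : (S + S).card + A.card ≤ p := by
    rwa [hTS, card_image_add_image S (by omega)] at hTT
  have hd0 : (d : ZMod p) ≠ 0 := by
    intro h0
    have := intCast_injOn (p := p) (a := d) (b := 0) (by omega) hdp le_rfl (by omega)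
      (by rw [h0, Int.cast_zero])
    omega
  set r' : ZMod p := (d : ZMod p)⁻¹ * r with hr'
  set t' : ZMod p := (d : ZMod p)⁻¹ * (t - u) with ht'
  have hr'0 : r' ≠ 0 := mul_ne_zero (inv_ne_zero hd0) hr
  have hSmem : ∀ a ∈ S, (a : ZMod p) ∈ affineImage A r' t' := by
    intro a ha
    have h1 := (hTmem (u + d * a) (by rw [hTS]; exact Finset.mem_image_of_mem _ ha)).2.2
    obtain ⟨b, hb, hb'⟩ := Finset.mem_image.1 h1
    refine Finset.mem_image.2 ⟨b, hb, ?_⟩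
    push_cast at hb'
    refine mul_left_cancel₀ hd0 ?_
    rw [hr', ht', mul_add, mul_assoc, mul_inv_cancel_left₀ hd0, mul_inv_cancel_left₀ hd0]
    linear_combination hb'
  have hSne : S.Nonempty := Finset.card_pos.1 (by omega)
  set m₀ := S.min' hSne with hm₀
  set m₁ := S.max' hSne with hm₁
  have hm₀S : m₀ ∈ S := S.min'_mem hSne
  have hm₁S : m₁ ∈ S := S.max'_mem hSne
  have hSm : ∀ a ∈ S, m₀ ≤ a ∧ a ≤ m₁ := fun a ha => ⟨S.min'_le a ha, S.le_max' a ha⟩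
  have hdiam : m₁ - m₀ ≤ 2 * (S.card : ℤ) - 3 := by
    by_contra! hcon
    have := freiman_three_mul_sub_three k S m₀ m₁ hScard hm₀S hm₁S hSm hS (by omega)
    omega
  obtain ⟨x, y, hxy, hinterval⟩ := exists_interval_subset_add S hm₀S hm₁S hSm hdiam (by omega)
  have hlen := card_add_diam_le S hm₀S hm₁S hSm hdiam
  -- `c` times the set lies in the complement of an interval
  have hval : ∀ z ∈ affineImage A r' t',
      ((c * z + (2 - c) * t' - y).val : ℤ) < p - (y - x) := by
    intro z hz
    refine val_lt_of_avoid _ fun i hi1 hi2 hi => ?_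
    obtain ⟨a, ha, b, hb, hab⟩ := Finset.mem_add.1 (hinterval i hi1 hi2)
    refine affineImage_avoid hr'0 t' hA _ (hSmem a ha) _ (hSmem b hb) z hz ?_
    rw [hi, ← hab]
    push_cast
    rfl
  have hkeep : A.card = k := by
    have h1 := card_le_arcCount_add_sub (affineImage A (c * r') (c * t' + (2 - c) * t' - y)) h
      (p + 1 - 2 * k) (by
        intro b hb
        obtain ⟨a, ha, rfl⟩ := Finset.mem_image.1 hb
        have := hval (r' * a + t') (Finset.mem_image.2 ⟨a, ha, rfl⟩)
        have e : c * (r' * a + t') + (2 - c) * t' - y =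
          c * r' * a + (c * t' + (2 - c) * t' - y) := by ring
        rw [e] at this
        omega)
    rw [card_affineImage A (mul_ne_zero hc hr'0)] at h1
    have h2 := hmax' (c * r') (c * t' + (2 - c) * t' - y) (mul_ne_zero hc hr'0)
    omega
  -- every short difference occurs in `S`
  refine exists_multiple_off_short_interval (p := p) (N := A.card) (μ := μ) (by omega) ?_
    (by omega) hμ hμp fun e he1 he2 => ?_
  · intro h3
    have h3' : 3 ∣ p := by exact_mod_cast h3
    have := (Nat.prime_dvd_prime_iff_eq Nat.prime_three hprime).1 h3'
    omega
  obtain ⟨a, ha, hae⟩ : ∃ a ∈ S, a + e ∈ S := by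
    by_contra! hcon
    have hdisj : Disjoint S (S.image (fun a => a + e)) := by
      rw [Finset.disjoint_left]
      intro b hb hb'
      obtain ⟨a, ha, rfl⟩ := Finset.mem_image.1 hb'
      exact hcon a ha hb
    have hsub : S ∪ S.image (fun a => a + e) ⊆ Finset.Icc m₀ (m₁ + e) := by
      intro b hb
      rw [Finset.mem_Icc]
      rcases Finset.mem_union.1 hb with hb | hb
      · have := hSm b hb
        omega
      · obtain ⟨a, ha, rfl⟩ := Finset.mem_image.1 hb
        have := hSm a ha
        omega
    have := Finset.card_le_card hsub
    rw [Finset.card_union_of_disjoint hdisj,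
      Finset.card_image_of_injective _ (add_left_injective e), Int.card_Icc] at this
    omega
  have h1 := hval _ (hSmem a ha)
  have h2 := hval _ (hSmem _ hae)
  set v₁ := (c * (a : ZMod p) + (2 - c) * t' - y).val with hv₁
  set v₂ := (c * ((a + e : ℤ) : ZMod p) + (2 - c) * t' - y).val with hv₂
  have hv : c * (e : ZMod p) = (v₂ : ZMod p) - v₁ := by
    rw [hv₁, hv₂, ZMod.natCast_zmod_val, ZMod.natCast_zmod_val]
    push_cast
    ring
  rcases hμc with hμc | hμc
  · refine ⟨v₂ - v₁, by rw [abs_le]; omega, ?_⟩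
    rw [← ZMod.intCast_zmod_eq_zero_iff_dvd]
    push_cast
    rw [hμc, hv, sub_self]
  · refine ⟨v₁ - v₂, by rw [abs_le]; omega, ?_⟩
    rw [← ZMod.intCast_zmod_eq_zero_iff_dvd]
    push_cast
    rw [hμc]
    linear_combination -hv

end

end MSumFree

theorem stmt4 :
    ∃ p₀ : ℕ, 0 < p₀ ∧ ∀ p : ℕ, p.Prime → p₀ ≤ p →
      ∀ m : ℕ, 2 ≤ m → m ≤ p - 2 →
        ∀ A : Finset (ZMod p),
          (∀ x ∈ A, ∀ y ∈ A, ∀ z ∈ A, x + y ≠ m • z) →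
          (A.card : ℝ) ≤ p / 3.1955 := by
  refine ⟨1000000, by norm_num, fun p hp hpl m hm hmp A hA => ?_⟩
  by_contra! hcon
  have : Fact p.Prime := ⟨hp⟩
  have hodd : ¬ 2 ∣ p := fun h => by
    have := (Nat.prime_dvd_prime_iff_eq Nat.prime_two hp).1 h
    omega
  have hc : (m : ZMod p) ≠ 0 := by
    rw [Ne, ZMod.natCast_eq_zero_iff]
    intro h
    have := Nat.le_of_dvd (by omega) h
    omega
  have hN : (p : ℝ) < 3.1955 * A.card := by
    rw [div_lt_iff₀ (by norm_num)] at hcon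
    linarith
  have hA' : ∀ x ∈ A, ∀ y ∈ A, ∀ z ∈ A, x + y ≠ (m : ZMod p) * z := by
    intro x hx y hy z hz
    rw [← nsmul_eq_mul]
    exact hA x hx y hy z hz
  rcases Nat.lt_or_ge (2 * m) p with h | h
  · exact MSumFree.false_of_dense hpl A hc hA' hN (μ := m) (by omega) (by omega) (Or.inl (by simp))
  · exact MSumFree.false_of_dense hpl A hc hA' hN (μ := p - m) (by omega) (by omega) (Or.inr (by simp))
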